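/- (Magnus 1932) Let m be a natural number and let r be any element of the free group on Fin m. Then the word problem for the one-relator group ⟨Fin m | r = 1⟩ is decidable: the predicate on lists l : List (Fin m × Bool) given by 'FreeGroup.mk l lies in the normal closure of {r}' is a computable predicate (ComputablePred). -/

import Mathlib

/-! ## A small calculus of recursively enumerable predicates -/

namespace OneRel

/-- Recursively enumerable predicates, as projections of primitive recursive ones. -/
def Sig {α : Type} [Primcodable α] (p : α → Prop) : Prop :=
  ∃ f : α → ℕ → Prop, PrimrecRel f ∧ ∀ a, p a ↔ ∃ n, f a n

section Sig
variable {α β : Type} [Primcodable α] [Primcodable β]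

theorem Sig.of_eq {p q : α → Prop} (hp : Sig p) (h : ∀ a, p a ↔ q a) : Sig q := by
  obtain ⟨f, hf, h1⟩ := hp
  exact ⟨f, hf, fun a => (h a).symm.trans (h1 a)⟩

theorem Sig.of_prim {p : α → Prop} (hp : PrimrecPred p) : Sig p :=
  ⟨fun a _ => p a, hp.comp Primrec.fst, fun a => by simp⟩

theorem Sig.comp {p : β → Prop} (hp : Sig p) {g : α → β} (hg : Primrec g) :
    Sig (fun a => p (g a)) := by
  obtain ⟨f, hf, h1⟩ := hp
  exact ⟨fun a n => f (g a) n, PrimrecRel.comp hf (hg.comp Primrec.fst) Primrec.snd,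
    fun a => h1 _⟩

theorem Sig.and {p q : α → Prop} (hp : Sig p) (hq : Sig q) : Sig (fun a => p a ∧ q a) := by
  obtain ⟨f, hf, h1⟩ := hp
  obtain ⟨g, hg, h2⟩ := hq
  refine ⟨fun a n => f a n.unpair.1 ∧ g a n.unpair.2, ?_, ?_⟩
  · refine PrimrecPred.and ?_ ?_
    · exact PrimrecRel.comp hf Primrec.fst (Primrec.fst.comp (Primrec.unpair.comp Primrec.snd))
    · exact PrimrecRel.comp hg Primrec.fst (Primrec.snd.comp (Primrec.unpair.comp Primrec.snd))
  · intro a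
    beta_reduce
    rw [h1, h2]
    constructor
    · rintro ⟨⟨n, hn⟩, ⟨m, hm⟩⟩
      exact ⟨Nat.pair n m, by simpa using hn, by simpa using hm⟩
    · rintro ⟨n, hn, hm⟩
      exact ⟨⟨_, hn⟩, ⟨_, hm⟩⟩

theorem Sig.or {p q : α → Prop} (hp : Sig p) (hq : Sig q) : Sig (fun a => p a ∨ q a) := by
  obtain ⟨f, hf, h1⟩ := hp
  obtain ⟨g, hg, h2⟩ := hq
  refine ⟨fun a n => f a n ∨ g a n, PrimrecPred.or hf hg, ?_⟩
  intro a
  beta_reduce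
  rw [h1, h2, exists_or]

theorem Sig.ex {p : α → β → Prop} (hp : Sig (fun x : α × β => p x.1 x.2)) :
    Sig (fun a => ∃ b, p a b) := by
  obtain ⟨f, hf, h1⟩ := hp
  have hf' := hf
  obtain ⟨hd, hf⟩ := hf
  refine ⟨fun a n => ∃ b, Encodable.decode (α := β) n.unpair.1 = some b ∧ f (a, b) n.unpair.2,
    ?_, ?_⟩
  · classical
    have : Primrec (fun x : α × ℕ =>
      ((Encodable.decode (α := β) x.2.unpair.1).map
        (fun b => decide (f (x.1, b) x.2.unpair.2))).getD false) := by
      refine Primrec.option_getD.comp (Primrec.option_map ?_ ?_) (Primrec.const false)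
      · exact Primrec.decode.comp (Primrec.fst.comp (Primrec.unpair.comp Primrec.snd))
      · have hq := hf.comp (f := fun y : (α × β) × ℕ => decide (f y.1 y.2))
          (g := fun z : (α × ℕ) × β => ((z.1.1, z.2), z.1.2.unpair.2))
          (Primrec.pair (Primrec.pair (Primrec.fst.comp Primrec.fst) Primrec.snd)
            (Primrec.snd.comp (Primrec.unpair.comp (Primrec.snd.comp Primrec.fst))))
        exact hq.of_eq (fun z => by simp)
    refine ⟨Classical.decPred _, this.of_eq ?_⟩
    rintro ⟨a, n⟩
    dsimp only
    refine Bool.eq_iff_iff.2 (Iff.trans ?_ (@decide_eq_true_iff _ (_)).symm)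
    rcases hdec : Encodable.decode (α := β) n.unpair.1 with _ | b
    · simp
    · simp
  · intro a
    constructor
    · rintro ⟨b, hb⟩
      obtain ⟨n, hn⟩ := (h1 (a, b)).1 hb
      exact ⟨Nat.pair (Encodable.encode b) n, b, by simp, by simpa using hn⟩
    · rintro ⟨n, b, -, hb⟩
      exact ⟨b, (h1 (a, b)).2 ⟨_, hb⟩⟩

theorem Sig.ex' {p : α × β → Prop} (hp : Sig p) : Sig (fun a => ∃ b, p (a, b)) :=
  Sig.ex (p := fun a b => p (a, b)) hp

theorem Sig.forall_mem {p : α → β → Prop} (hp : Sig (fun x : α × β => p x.1 x.2))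
    {l : α → List β} (hl : Primrec l) : Sig (fun a => ∀ b ∈ l a, p a b) := by
  obtain ⟨f, hf, h1⟩ := hp
  refine ⟨fun a n => ∀ b ∈ l a, ∃ k < n, f (a, b) k, ?_, ?_⟩
  · have e1 : PrimrecRel (fun (k : ℕ) (y : β × (α × ℕ)) => f (y.2.1, y.1) k) :=
      PrimrecRel.comp hf (Primrec.pair (Primrec.fst.comp (Primrec.snd.comp Primrec.snd))
        (Primrec.fst.comp Primrec.snd)) Primrec.fst
    have e2 := e1.exists_mem_list
    have e3 : PrimrecRel (fun (b : β) (y : α × ℕ) => ∃ k < y.2, f (y.1, b) k) :=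
      (PrimrecRel.comp e2 (f := fun z : β × (α × ℕ) => List.range z.2.2) (g := fun z => z)
        (Primrec.list_range.comp (Primrec.snd.comp Primrec.snd)) Primrec.id).of_eq
        (fun z => by simp)
    have e4 := e3.forall_mem_list
    exact PrimrecRel.comp e4 (f := fun z : α × ℕ => l z.1) (g := fun z => z)
      (hl.comp Primrec.fst) Primrec.id
  · intro a
    beta_reduce
    generalize l a = L
    constructor
    · intro h
      induction L with
      | nil => exact ⟨0, by simp⟩
      | cons b L ih =>
        obtain ⟨n, hn⟩ := ih (fun c hc => h c (List.mem_cons_of_mem _ hc))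
        obtain ⟨m, hm⟩ := (h1 (a, b)).1 (h b List.mem_cons_self)
        refine ⟨n + m + 1, ?_⟩
        intro c hc
        rcases List.mem_cons.1 hc with rfl | hc
        · exact ⟨m, by omega, hm⟩
        · obtain ⟨k, hk, hk'⟩ := hn c hc
          exact ⟨k, by omega, hk'⟩
    · rintro ⟨n, hn⟩ b hb
      obtain ⟨k, -, hk⟩ := hn b hb
      exact (h1 (a, b)).2 ⟨k, hk⟩

theorem Sig.isChain {R : β → β → Prop} (hR : Sig (fun x : β × β => R x.1 x.2)) :
    Sig (fun l : List β => l.IsChain R) := by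
  classical
  have h1 : Sig (fun x : List β × ℕ => x.1[x.2+1]? = none ∨
      ∃ y : β × β, (x.1[x.2]? = some y.1 ∧ x.1[x.2+1]? = some y.2) ∧ R y.1 y.2) := by
    refine Sig.or (Sig.of_prim ?_) (Sig.ex (Sig.and (Sig.of_prim (PrimrecPred.and ?_ ?_)) ?_))
    · exact PrimrecRel.comp Primrec.eq (Primrec.list_getElem?.comp Primrec.fst
        (Primrec.succ.comp Primrec.snd)) (Primrec.const none)
    · exact PrimrecRel.comp Primrec.eq (Primrec.list_getElem?.comp (Primrec.fst.comp Primrec.fst)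
        (Primrec.snd.comp Primrec.fst))
        (Primrec.option_some.comp (Primrec.fst.comp Primrec.snd))
    · exact PrimrecRel.comp Primrec.eq (Primrec.list_getElem?.comp (Primrec.fst.comp Primrec.fst)
        (Primrec.succ.comp (Primrec.snd.comp Primrec.fst)))
        (Primrec.option_some.comp (Primrec.snd.comp Primrec.snd))
    · exact hR.comp Primrec.snd
  refine (Sig.forall_mem (p := fun (l : List β) (i : ℕ) => l[i+1]? = none ∨
      ∃ y : β × β, (l[i]? = some y.1 ∧ l[i+1]? = some y.2) ∧ R y.1 y.2) h1
      (Primrec.list_range.comp Primrec.list_length)).of_eq ?_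
  intro l
  rw [List.isChain_iff_getElem]
  constructor
  · intro h i hi
    rcases h i (List.mem_range.2 (by omega)) with h | ⟨y, ⟨h2, h3⟩, h4⟩
    · simp at h; omega
    · rw [List.getElem?_eq_some_iff] at h2 h3
      obtain ⟨_, h2⟩ := h2
      obtain ⟨_, h3⟩ := h3
      rw [h2, h3]; exact h4
  · intro h i _
    by_cases hi : i + 1 < l.length
    · right
      exact ⟨(l[i], l[i+1]), ⟨by simp, by simp [hi]⟩, h i hi⟩
    · left; simp; omega

theorem Sig.re {p : α → Prop} (hp : Sig p) : REPred p := by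
  obtain ⟨f, ⟨hd, hf⟩, h1⟩ := hp
  have : Partrec (fun a : α => Nat.rfind (fun n => Part.some (@decide (f a n) (hd (a, n))))) := by
    refine Partrec.rfind ?_
    exact hf.to_comp.partrec
  refine this.dom_re.of_eq ?_
  intro a
  rw [h1]
  refine Nat.rfind_dom.trans ?_
  constructor
  · rintro ⟨n, hn, -⟩
    exact ⟨n, by simpa using hn⟩
  · rintro ⟨n, hn⟩
    exact ⟨n, by simpa using hn, fun _ => trivial⟩

theorem Sig.computable {p : α → Prop} (hp : Sig p) (hn : Sig (fun a => ¬ p a)) :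
    ComputablePred p :=
  ComputablePred.computable_iff_re_compl_re'.2 ⟨hp.re, hn.re⟩

end Sig

/-! ## The free group as a `Primcodable` type -/

section FG
variable {α β γ : Type} [Primcodable α] [DecidableEq α] [Primcodable β] [DecidableEq β]
  [Primcodable γ]

theorem reduce_eq_foldr {α : Type} [DecidableEq α] (L : List (α × Bool)) : FreeGroup.reduce L =
    L.foldr (fun a M => List.casesOn M [a] fun b T =>
      if a.1 = b.1 ∧ a.2 = !b.2 then T else a :: b :: T) [] := by
  induction L with
  | nil => rfl
  | cons a L ih => rw [FreeGroup.reduce.cons, List.foldr_cons, ← ih]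

theorem primrec_reduce : Primrec (FreeGroup.reduce : List (α × Bool) → List (α × Bool)) := by
  refine Primrec.of_eq (f := fun L : List (α × Bool) =>
    L.foldr (fun a M => List.casesOn M [a] fun b T =>
      if a.1 = b.1 ∧ a.2 = !b.2 then T else a :: b :: T) []) ?_
    (fun L => (reduce_eq_foldr L).symm)
  refine Primrec.list_foldr (h := fun (_ : List (α × Bool)) (y : (α × Bool) × List (α × Bool)) =>
    (List.casesOn y.2 [y.1] fun b T =>
      if y.1.1 = b.1 ∧ y.1.2 = !b.2 then T else y.1 :: b :: T)) Primrec.id (Primrec.const []) ?_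
  refine Primrec.list_casesOn (α := (List (α × Bool)) × ((α × Bool) × List (α × Bool)))
    (f := fun y => y.2.2) (g := fun y => [y.2.1])
    (h := fun y z => if y.2.1.1 = z.1.1 ∧ y.2.1.2 = !z.1.2 then z.2 else y.2.1 :: z.1 :: z.2)
    (Primrec.snd.comp Primrec.snd) ?_ ?_
  · exact Primrec.list_cons.comp (Primrec.fst.comp Primrec.snd) (Primrec.const [])
  · have hy : Primrec (fun w : (List (α × Bool) × ((α × Bool) × List (α × Bool))) ×
        ((α × Bool) × List (α × Bool)) => w.1.2.1) :=
      Primrec.fst.comp (Primrec.snd.comp Primrec.fst)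
    have hz : Primrec (fun w : (List (α × Bool) × ((α × Bool) × List (α × Bool))) ×
        ((α × Bool) × List (α × Bool)) => w.2.1) :=
      Primrec.fst.comp Primrec.snd
    have hT : Primrec (fun w : (List (α × Bool) × ((α × Bool) × List (α × Bool))) ×
        ((α × Bool) × List (α × Bool)) => w.2.2) :=
      Primrec.snd.comp Primrec.snd
    refine Primrec.ite (PrimrecPred.and ?_ ?_) hT
      (Primrec.list_cons.comp hy (Primrec.list_cons.comp hz hT))
    · exact PrimrecRel.comp Primrec.eq (Primrec.fst.comp hy) (Primrec.fst.comp hz)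
    · exact PrimrecRel.comp Primrec.eq (Primrec.snd.comp hy)
        (Primrec.not.comp (Primrec.snd.comp hz))

theorem primrecPred_reduced :
    PrimrecPred (fun L : List (α × Bool) => FreeGroup.reduce L = L) :=
  PrimrecRel.comp Primrec.eq primrec_reduce Primrec.id

/-- Elements of the free group correspond to reduced words. -/
def wordEquiv (α : Type) [DecidableEq α] :
    FreeGroup α ≃ {L : List (α × Bool) // FreeGroup.reduce L = L} where
  toFun w := ⟨w.toWord, FreeGroup.reduce_toWord w⟩
  invFun L := FreeGroup.mk L.1
  left_inv w := FreeGroup.mk_toWord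
  right_inv L := Subtype.ext (by simpa using L.2)

instance instPrimcodableFG : Primcodable (FreeGroup α) :=
  @Primcodable.ofEquiv _ _ (Primcodable.subtype primrecPred_reduced) (wordEquiv α)

theorem primrec_toWord : Primrec (FreeGroup.toWord : FreeGroup α → List (α × Bool)) := by
  let _ : Primcodable {L : List (α × Bool) // FreeGroup.reduce L = L} :=
    Primcodable.subtype primrecPred_reduced
  have h1 : Primrec (wordEquiv α) := Primrec.of_equiv
  exact (Primrec.subtype_val (hp := primrecPred_reduced)).comp h1

theorem primrec_mk : Primrec (FreeGroup.mk : List (α × Bool) → FreeGroup α) := by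
  let _ : Primcodable {L : List (α × Bool) // FreeGroup.reduce L = L} :=
    Primcodable.subtype primrecPred_reduced
  have h1 : Primrec (wordEquiv α).symm := Primrec.of_equiv_symm
  have h2 : Primrec (fun L : List (α × Bool) =>
      (⟨FreeGroup.reduce L, FreeGroup.reduce.idem⟩ :
        {L : List (α × Bool) // FreeGroup.reduce L = L})) :=
    Primrec.subtype_mk (hp := primrecPred_reduced) primrec_reduce
  exact (h1.comp h2).of_eq (fun L => FreeGroup.reduce.self)

theorem primrec_mul : Primrec₂ (fun u v : FreeGroup α => u * v) := by
  refine (primrec_mk.comp (Primrec.list_append.comp (primrec_toWord.comp Primrec.fst)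
    (primrec_toWord.comp Primrec.snd))).of_eq ?_
  rintro ⟨u, v⟩
  rw [← FreeGroup.mul_mk, FreeGroup.mk_toWord, FreeGroup.mk_toWord]

theorem primrec_inv : Primrec (fun u : FreeGroup α => u⁻¹) := by
  have : Primrec (FreeGroup.invRev : List (α × Bool) → List (α × Bool)) :=
    Primrec.list_reverse.comp (Primrec.list_map (g := fun _ (a : α × Bool) => (a.1, !a.2))
      Primrec.id (Primrec.pair (Primrec.fst.comp Primrec.snd)
        (Primrec.not.comp (Primrec.snd.comp Primrec.snd))))
  refine (primrec_mk.comp (this.comp primrec_toWord)).of_eq ?_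
  intro u
  rw [← FreeGroup.inv_mk, FreeGroup.mk_toWord]

theorem primrec_of : Primrec (FreeGroup.of : α → FreeGroup α) :=
  primrec_mk.comp (Primrec.list_cons.comp (Primrec.pair Primrec.id (Primrec.const true))
    (Primrec.const []))

theorem primrec_prod {f : γ → List (FreeGroup α)} (hf : Primrec f) :
    Primrec (fun c => (f c).prod) := by
  refine (Primrec.list_foldr (h := fun (_ : γ) (y : FreeGroup α × FreeGroup α) => y.1 * y.2)
    hf (Primrec.const 1) ?_).of_eq ?_
  · exact primrec_mul.comp (Primrec.fst.comp Primrec.snd) (Primrec.snd.comp Primrec.snd)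
  · intro c
    rw [List.prod_eq_foldr]

/-- A homomorphism of free groups is primitive recursive if it is so on generators. -/
theorem primrec_hom (φ : FreeGroup α →* FreeGroup β)
    (h : Primrec (fun a => φ (FreeGroup.of a))) : Primrec φ := by
  have h1 : Primrec (fun w : FreeGroup α => (w.toWord.map (fun p : α × Bool =>
      cond p.2 (φ (FreeGroup.of p.1)) (φ (FreeGroup.of p.1))⁻¹)).prod) := by
    refine primrec_prod (Primrec.list_map primrec_toWord ?_)
    exact Primrec.cond (Primrec.snd.comp Primrec.snd) (h.comp (Primrec.fst.comp Primrec.snd))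
      (primrec_inv.comp (h.comp (Primrec.fst.comp Primrec.snd)))
  refine h1.of_eq ?_
  intro w
  have h2 : FreeGroup.lift (fun a => φ (FreeGroup.of a)) = φ := by
    ext a; simp
  have h3 := FreeGroup.lift_mk (f := fun a => φ (FreeGroup.of a)) (L := w.toWord)
  rw [h2, FreeGroup.mk_toWord] at h3
  exact h3.symm

theorem primrec_eq {f g : γ → FreeGroup α} (hf : Primrec f) (hg : Primrec g) :
    PrimrecPred (fun c => f c = g c) := PrimrecRel.comp Primrec.eq hf hg

end FG
end OneRel


/-! ## Subgroups generated by letters, normal closures -/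

namespace OneRel
open FreeGroup (of mk)

section FSdefs
variable {A : Type}

/-- The subgroup of the free group generated by the letters in `S`. -/
def FS (S : Set A) : Subgroup (FreeGroup A) := Subgroup.closure (of '' S)

open Classical in
/-- The endomorphism killing all letters outside `S`. -/
noncomputable def kill (S : Set A) : FreeGroup A →* FreeGroup A :=
  FreeGroup.lift (fun a => if a ∈ S then of a else 1)

theorem kill_of_mem {S : Set A} {a : A} (h : a ∈ S) : kill S (of a) = of a := by
  simp [kill, h]

theorem kill_of_notMem {S : Set A} {a : A} (h : a ∉ S) : kill S (of a) = 1 := by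
  simp [kill, h]

theorem of_mem_FS {S : Set A} {a : A} (h : a ∈ S) : of a ∈ FS S :=
  Subgroup.subset_closure ⟨a, h, rfl⟩

/-- To check that a homomorphism maps `FS S` to a subgroup, look at generators. -/
theorem map_FS {G : Type*} [Group G] {S : Set A} {φ : FreeGroup A →* G} {K : Subgroup G}
    (h : ∀ a ∈ S, φ (of a) ∈ K) {w : FreeGroup A} (hw : w ∈ FS S) : φ w ∈ K := by
  have : FS S ≤ K.comap φ := by
    refine (Subgroup.closure_le _).2 ?_
    rintro _ ⟨a, ha, rfl⟩
    exact h a ha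
  exact this hw

theorem eqOn_FS {G : Type*} [Group G] {S : Set A} {φ ψ : FreeGroup A →* G}
    (h : ∀ a ∈ S, φ (of a) = ψ (of a)) {w : FreeGroup A} (hw : w ∈ FS S) : φ w = ψ w := by
  have : FS S ≤ φ.eqLocus ψ := by
    refine (Subgroup.closure_le _).2 ?_
    rintro _ ⟨a, ha, rfl⟩
    exact h a ha
  exact this hw

theorem FS_mono {S T : Set A} (h : S ⊆ T) : FS S ≤ FS T :=
  Subgroup.closure_mono (Set.image_mono h)

theorem FS_univ (w : FreeGroup A) : w ∈ FS (Set.univ : Set A) := by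
  induction w using FreeGroup.induction_on with
  | C1 => exact one_mem _
  | of x => exact of_mem_FS trivial
  | inv_of x _ => exact inv_mem (of_mem_FS trivial)
  | mul x y hx hy => exact mul_mem hx hy

theorem map_all {G : Type*} [Group G] {φ : FreeGroup A →* G} {K : Subgroup G}
    (h : ∀ a, φ (of a) ∈ K) (w : FreeGroup A) : φ w ∈ K :=
  map_FS (S := Set.univ) (fun a _ => h a) (FS_univ w)

theorem kill_mem (S : Set A) (w : FreeGroup A) : kill S w ∈ FS S := by
  refine map_all ?_ w
  intro a
  by_cases ha : a ∈ S
  · rw [kill_of_mem ha]; exact of_mem_FS ha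
  · rw [kill_of_notMem ha]; exact one_mem _

theorem kill_eq_self {S : Set A} {w : FreeGroup A} (hw : w ∈ FS S) : kill S w = w :=
  eqOn_FS (ψ := MonoidHom.id _) (fun _ ha => kill_of_mem ha) hw

theorem mem_FS_iff {S : Set A} {w : FreeGroup A} : w ∈ FS S ↔ kill S w = w :=
  ⟨kill_eq_self, fun h => h ▸ kill_mem S w⟩

theorem kill_eq_one {S T : Set A} (hST : ∀ a ∈ T, a ∉ S) {w : FreeGroup A} (hw : w ∈ FS T) :
    kill S w = 1 :=
  eqOn_FS (ψ := 1) (fun a ha => kill_of_notMem (hST a ha)) hw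

theorem mk_mem_FS {S : Set A} {L : List (A × Bool)} (h : ∀ p ∈ L, p.1 ∈ S) : mk L ∈ FS S := by
  induction L with
  | nil => exact one_mem _
  | cons p L ih =>
    have h1 : mk (p :: L) = mk [p] * mk L := by simp [FreeGroup.mul_mk]
    rw [h1]
    refine mul_mem ?_ (ih fun q hq => h q (List.mem_cons_of_mem _ hq))
    have hp := h p List.mem_cons_self
    obtain ⟨a, b⟩ := p
    cases b with
    | true => exact of_mem_FS hp
    | false => exact inv_mem (of_mem_FS (S := S) hp)

theorem FS_exists_list {S : Set A} {w : FreeGroup A} (hw : w ∈ FS S) :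
    ∃ L : List (A × Bool), mk L = w ∧ ∀ p ∈ L, p.1 ∈ S := by
  induction hw using Subgroup.closure_induction with
  | mem x hx =>
    obtain ⟨a, ha, rfl⟩ := hx
    exact ⟨[(a, true)], rfl, by simpa using ha⟩
  | one => exact ⟨[], rfl, by simp⟩
  | mul x y _ _ hx hy =>
    obtain ⟨L, rfl, hL⟩ := hx
    obtain ⟨M, rfl, hM⟩ := hy
    refine ⟨L ++ M, FreeGroup.mul_mk.symm, ?_⟩
    intro p hp
    rcases List.mem_append.1 hp with h | h
    exacts [hL p h, hM p h]
  | inv x _ hx =>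
    obtain ⟨L, rfl, hL⟩ := hx
    refine ⟨FreeGroup.invRev L, FreeGroup.inv_mk.symm, ?_⟩
    intro p hp
    simp only [FreeGroup.invRev, List.mem_reverse, List.mem_map] at hp
    obtain ⟨q, hq, rfl⟩ := hp
    exact hL q hq

end FSdefs

section Sig2
variable {A : Type} [Primcodable A] [DecidableEq A]

theorem primrec_kill {S : Set A} (hS : PrimrecPred (fun a => a ∈ S)) : Primrec (kill S) := by
  classical
  refine primrec_hom _ ?_
  refine (Primrec.ite hS primrec_of (Primrec.const 1)).of_eq ?_
  intro a
  simp [kill]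

theorem prim_mem_FS {S : Set A} (hS : PrimrecPred (fun a => a ∈ S)) :
    PrimrecPred (fun w => w ∈ FS S) :=
  (primrec_eq (primrec_kill hS) Primrec.id).of_eq (fun _ => mem_FS_iff.symm)

theorem sig_closure {K : Set (FreeGroup A)} (hK : Sig (fun w => w ∈ K)) :
    Sig (fun w => w ∈ Subgroup.closure K) := by
  have h1 : Sig (fun x : FreeGroup A × List (FreeGroup A) =>
      (∀ y ∈ x.2, y ∈ K ∨ y⁻¹ ∈ K) ∧ x.2.prod = x.1) := by
    refine Sig.and ?_ (Sig.of_prim (primrec_eq (primrec_prod Primrec.snd) Primrec.fst))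
    refine Sig.forall_mem (p := fun _ y => y ∈ K ∨ y⁻¹ ∈ K) ?_ Primrec.snd
    exact Sig.or (hK.comp Primrec.snd) (hK.comp (primrec_inv.comp Primrec.snd))
  refine (Sig.ex' h1).of_eq ?_
  intro w
  constructor
  · rintro ⟨l, hl, h⟩
    dsimp only at hl h
    rw [← h]
    refine Subgroup.list_prod_mem _ ?_
    intro y hy
    rcases hl y hy with h | h
    · exact Subgroup.subset_closure h
    · exact (inv_mem_iff (H := Subgroup.closure K)).1 (Subgroup.subset_closure h)
  · intro hw
    rw [← Subgroup.mem_toSubmonoid, Subgroup.closure_toSubmonoid] at hw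
    obtain ⟨l, hl, h⟩ := Submonoid.exists_list_of_mem_closure hw
    exact ⟨l, fun y hy => (hl y hy), h⟩

theorem sig_normalClosure {K : Set (FreeGroup A)} (hK : Sig (fun w => w ∈ K)) :
    Sig (fun w => w ∈ Subgroup.normalClosure K) := by
  refine sig_closure ?_
  have h1 : Sig (fun x : FreeGroup A × (FreeGroup A × FreeGroup A) =>
      x.2.1 ∈ K ∧ x.2.2 * x.2.1 * x.2.2⁻¹ = x.1) := by
    refine Sig.and (hK.comp (Primrec.fst.comp Primrec.snd)) (Sig.of_prim (primrec_eq ?_ Primrec.fst))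
    have h2 : Primrec (fun x : FreeGroup A × (FreeGroup A × FreeGroup A) => x.2.2) :=
      Primrec.snd.comp Primrec.snd
    exact primrec_mul.comp (primrec_mul.comp h2 (Primrec.fst.comp Primrec.snd))
      (primrec_inv.comp h2)
  refine (Sig.ex' h1).of_eq ?_
  intro w
  rw [Group.mem_conjugatesOfSet_iff]
  constructor
  · rintro ⟨⟨a, c⟩, ha, h⟩
    exact ⟨a, ha, isConj_iff.2 ⟨c, h⟩⟩
  · rintro ⟨a, ha, h⟩
    obtain ⟨c, hc⟩ := isConj_iff.1 h
    exact ⟨⟨a, c⟩, ha, hc⟩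

/-- The normal closure of one element. -/
abbrev NC {A : Type} (r : FreeGroup A) : Subgroup (FreeGroup A) :=
  Subgroup.normalClosure {r}

theorem sig_NC (r : FreeGroup A) : Sig (fun w => w ∈ NC r) :=
  sig_normalClosure (Sig.of_prim (primrec_eq Primrec.id (Primrec.const r)))

/-- Freiheitssatz for `S`. -/
def Fr {A : Type} (r : FreeGroup A) (S : Set A) : Prop :=
  ∀ w ∈ FS S, w ∈ NC r → w = 1

/-- Membership of `w` in the subgroup generated by `S` modulo `r`. -/
def Mem {A : Type} (r : FreeGroup A) (S : Set A) (w : FreeGroup A) : Prop :=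
  ∃ u ∈ FS S, u⁻¹ * w ∈ NC r

/-- Decidability (of the complement) of membership in the subgroup generated by `S`. -/
def De (r : FreeGroup A) (S : Set A) : Prop := Sig (fun w => ¬ Mem r S w)

theorem sig_div {r : FreeGroup A} :
    Sig (fun x : FreeGroup A × FreeGroup A => x.2⁻¹ * x.1 ∈ NC r) :=
  (sig_NC r).comp (primrec_mul.comp (primrec_inv.comp Primrec.snd) Primrec.fst)

theorem uniq_mem {A : Type} {r : FreeGroup A} {S : Set A} (hF : Fr r S) {u v w : FreeGroup A}
    (hu : u ∈ FS S) (hv : v ∈ FS S) (h1 : u⁻¹ * w ∈ NC r) (h2 : v⁻¹ * w ∈ NC r) : u = v := by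
  have h3 : u⁻¹ * v ∈ NC r := by
    have := mul_mem h1 (inv_mem h2)
    simpa [mul_assoc] using this
  have := hF _ (mul_mem (inv_mem hu) hv) h3
  exact (inv_mul_eq_one.1 this)

/-- Refinement: if `S` has the Freiheitssatz and decidable membership then
`¬ ∃ u ∈ P, u⁻¹ w ∈ NC r` is r.e. for each `P ⊆ FS S` with r.e. complement. -/
theorem sig_refine {r : FreeGroup A} {S : Set A} (hS : PrimrecPred (fun a => a ∈ S))
    (hF : Fr r S) (hD : De r S) {P : FreeGroup A → Prop} (hP : ∀ u, P u → u ∈ FS S)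
    (hn : Sig (fun u => ¬ P u)) : Sig (fun w => ¬ ∃ u, P u ∧ u⁻¹ * w ∈ NC r) := by
  have h1 : Sig (fun w : FreeGroup A => ∃ u, (u ∈ FS S ∧ ¬ P u) ∧ u⁻¹ * w ∈ NC r) := by
    refine Sig.ex (Sig.and (Sig.and ?_ (hn.comp Primrec.snd)) sig_div)
    exact (Sig.of_prim (prim_mem_FS hS)).comp Primrec.snd
  refine (Sig.or hD h1).of_eq ?_
  intro w
  constructor
  · rintro (h | ⟨u, ⟨hu, hPu⟩, huw⟩) ⟨v, hv, hvw⟩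
    · exact h ⟨v, hP v hv, hvw⟩
    · rw [uniq_mem hF hu (hP v hv) huw hvw] at hPu
      exact hPu hv
  · intro h
    by_cases hm : Mem r S w
    · obtain ⟨u, hu, huw⟩ := hm
      exact Or.inr ⟨u, ⟨hu, fun hPu => h ⟨u, hPu, huw⟩⟩, huw⟩
    · exact Or.inl hm

theorem good_mono {r : FreeGroup A} {S T : Set A} (hS : PrimrecPred (fun a => a ∈ S))
    (hT : PrimrecPred (fun a => a ∈ T)) (h : T ⊆ S)
    (hF : Fr r S) (hD : De r S) : Fr r T ∧ De r T :=
  ⟨fun w hw => hF w (FS_mono h hw), sig_refine hS hF hD (P := fun u => u ∈ FS T)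
    (fun _ hu => FS_mono h hu) (Sig.of_prim (prim_mem_FS hT).not)⟩

theorem sig_not_NC {r : FreeGroup A} {S : Set A} (hS : PrimrecPred (fun a => a ∈ S))
    (hF : Fr r S) (hD : De r S) : Sig (fun w => w ∉ NC r) := by
  refine (sig_refine hS hF hD (P := fun u => u = 1) (fun u hu => hu ▸ one_mem _)
    (Sig.of_prim (primrec_eq Primrec.id (Primrec.const 1)).not)).of_eq ?_
  intro w
  simp

theorem NC_le {A : Type} {r : FreeGroup A} {K : Subgroup (FreeGroup A)} [K.Normal]
    (h : r ∈ K) : NC r ≤ K :=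
  Subgroup.normalClosure_le_normal (by simpa using h)

theorem NC_ker {A : Type} {G : Type*} [Group G] {r w : FreeGroup A} (φ : FreeGroup A →* G)
    (h : φ r = 1) (hw : w ∈ NC r) : φ w = 1 :=
  NC_le (K := φ.ker) h hw

theorem mem_NC {A : Type} (r : FreeGroup A) : r ∈ NC r :=
  Subgroup.subset_normalClosure rfl

theorem NC_conj {A : Type} {r : FreeGroup A} (g : FreeGroup A) : NC (g * r * g⁻¹) = NC r := by
  apply le_antisymm
  · exact NC_le (Subgroup.normalClosure_normal.conj_mem _ (mem_NC r) g)
  · refine NC_le ?_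
    have := Subgroup.normalClosure_normal.conj_mem _ (mem_NC (g * r * g⁻¹)) g⁻¹
    simpa [mul_assoc] using this

theorem NC_inv {A : Type} {r : FreeGroup A} : NC (r⁻¹) = NC r := by
  apply le_antisymm
  · exact NC_le (inv_mem (mem_NC r))
  · refine NC_le ?_
    simpa using inv_mem (mem_NC r⁻¹)

end Sig2
end OneRel


/-! ## HNN extensions -/

namespace OneRel
open FreeGroup (of mk)

/-- Embedding of the free group on `B` into the free group on `Option B`. -/
abbrev emb {B : Type} : FreeGroup B →* FreeGroup (Option B) := FreeGroup.map some

/-- The word associated to a certificate. -/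
def cword {B : Type} (c : FreeGroup B × List (Bool × FreeGroup B)) : FreeGroup (Option B) :=
  emb c.1 * (c.2.map (fun x => (cond x.1 (of none) (of none)⁻¹) * emb x.2)).prod

/-- Translation of booleans to units. -/
def bu (b : Bool) : ℤˣ := cond b 1 (-1)

theorem bu_inj {a b : Bool} : bu a = bu b ↔ a = b := by
  cases a <;> cases b <;> decide

section hnn
variable {B : Type} [Primcodable B] [DecidableEq B]

theorem primrec_emb : Primrec (emb : FreeGroup B → FreeGroup (Option B)) := by
  refine primrec_hom _ ?_
  exact (primrec_of.comp Primrec.option_some).of_eq (fun a => by simp)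

theorem primrec_cword : Primrec (cword : FreeGroup B × List (Bool × FreeGroup B) → _) := by
  refine primrec_mul.comp (primrec_emb.comp Primrec.fst) (primrec_prod ?_)
  refine Primrec.list_map Primrec.snd ?_
  refine primrec_mul.comp ?_ (primrec_emb.comp (Primrec.snd.comp Primrec.snd))
  exact Primrec.cond (Primrec.fst.comp Primrec.snd) (Primrec.const _) (Primrec.const _)

theorem sig_hnn {G : Type} [Group G] {X Y : Subgroup G} {φ : X ≃* Y} (p : FreeGroup B →* G)
    (hp : Function.Surjective p) (q : FreeGroup (Option B) →* HNNExtension G X Y φ)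
    (hqt : q (of none) = HNNExtension.t) (hqb : ∀ v, q (emb v) = HNNExtension.of (p v))
    (hker : Sig (fun w => q w = 1)) (hX : Sig (fun v => p v ∉ X)) (hY : Sig (fun v => p v ∉ Y))
    (D : Set G) (hD : Sig (fun v => p v ∉ D)) :
    Sig (fun w => ¬ ∃ g ∈ D, HNNExtension.of g = q w) := by
  have h0 : Sig (fun x : FreeGroup (Option B) × (FreeGroup B × List (Bool × FreeGroup B)) =>
      (x.2.2.IsChain (fun a b => a.1 = b.1 ∨ (a.1 = true ∧ p a.2 ∉ X) ∨ (a.1 = false ∧ p a.2 ∉ Y))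
        ∧ (x.2.2 ≠ [] ∨ p x.2.1 ∉ D)) ∧ q (x.1⁻¹ * cword x.2) = 1) := by
    refine Sig.and (Sig.and ?_ (Sig.or ?_ (hD.comp (Primrec.fst.comp Primrec.snd)))) ?_
    · refine Sig.comp (g := fun x : FreeGroup (Option B) ×
        (FreeGroup B × List (Bool × FreeGroup B)) => x.2.2) (Sig.isChain ?_)
        (Primrec.snd.comp Primrec.snd)
      refine Sig.or (Sig.of_prim ?_) (Sig.or (Sig.and (Sig.of_prim ?_) ?_)
        (Sig.and (Sig.of_prim ?_) ?_))
      · exact PrimrecRel.comp Primrec.eq (Primrec.fst.comp Primrec.fst)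
          (Primrec.fst.comp Primrec.snd)
      · exact PrimrecRel.comp Primrec.eq (Primrec.fst.comp Primrec.fst) (Primrec.const _)
      · exact hX.comp (Primrec.snd.comp Primrec.fst)
      · exact PrimrecRel.comp Primrec.eq (Primrec.fst.comp Primrec.fst) (Primrec.const _)
      · exact hY.comp (Primrec.snd.comp Primrec.fst)
    · refine Sig.of_prim (PrimrecPred.not ?_)
      exact PrimrecRel.comp Primrec.eq (Primrec.snd.comp Primrec.snd) (Primrec.const _)
    · exact hker.comp (primrec_mul.comp (primrec_inv.comp Primrec.fst)
        (primrec_cword.comp Primrec.snd))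
  refine (Sig.ex' h0).of_eq ?_
  have key : ∀ c : FreeGroup B × List (Bool × FreeGroup B), q (cword c) =
      HNNExtension.of (p c.1) * ((c.2.map (fun x => (bu x.1, p x.2))).map
        (fun x => HNNExtension.t ^ (x.1 : ℤ) * HNNExtension.of x.2)).prod := by
    rintro ⟨v, l⟩
    simp only [cword, map_mul, hqb, map_list_prod, List.map_map]
    congr 2
    refine List.map_congr_left ?_
    rintro ⟨b, y⟩ -
    cases b <;> simp [bu, hqb, hqt]
  intro w
  constructor
  · rintro ⟨⟨v, l⟩, ⟨hc, hl⟩, hq⟩ ⟨g, hg, hgw⟩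
    dsimp only at hc hl hq
    have hc' : (l.map (fun x => (bu x.1, p x.2))).IsChain
        (fun a b => a.2 ∈ HNNExtension.toSubgroup X Y a.1 → a.1 = b.1) := by
      rw [List.isChain_map]
      refine hc.imp ?_
      rintro ⟨a, x⟩ ⟨b, y⟩ h hm
      dsimp only at h hm ⊢
      rw [bu_inj]
      rcases h with h | ⟨rfl, h⟩ | ⟨rfl, h⟩
      · exact h
      · exact absurd hm h
      · exact absurd hm h
    have hq' : q w = q (cword (v, l)) := by
      rw [map_mul, map_inv, inv_mul_eq_one] at hq
      exact hq
    rw [key] at hq'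
    have hnil := HNNExtension.ReducedWord.toList_eq_nil_of_mem_of_range φ
      (⟨p v, _, hc'⟩ : HNNExtension.NormalWord.ReducedWord G X Y) ⟨g, hgw.trans hq'⟩
    have hnil' : l = [] := by simpa using hnil
    subst hnil'
    rcases hl with hl | hl
    · exact hl rfl
    · simp only [List.map_nil, List.prod_nil, mul_one] at hq'
      have := HNNExtension.of_injective φ (hgw.trans hq')
      exact hl (this ▸ hg)
  · intro h
    obtain ⟨d⟩ := HNNExtension.NormalWord.TransversalPair.nonempty G X Y
    obtain ⟨n, hn⟩ : ∃ n : HNNExtension.NormalWord d,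
        n.toReducedWord.prod φ = q w := ⟨HNNExtension.NormalWord.equiv φ d (q w),
          (HNNExtension.NormalWord.equiv φ d).left_inv (q w)⟩
    obtain ⟨v, hv⟩ := hp n.head
    have hlist : ∀ L : List (ℤˣ × G), ∃ l : List (Bool × FreeGroup B),
        l.map (fun x => (bu x.1, p x.2)) = L := by
      intro L
      induction L with
      | nil => exact ⟨[], rfl⟩
      | cons a L ih =>
        obtain ⟨l, rfl⟩ := ih
        obtain ⟨u, g⟩ := a
        obtain ⟨y, rfl⟩ := hp g
        rcases Int.units_eq_one_or u with rfl | rfl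
        · exact ⟨(true, y) :: l, rfl⟩
        · exact ⟨(false, y) :: l, rfl⟩
    obtain ⟨l, hl⟩ := hlist n.toList
    have hw : q (cword (v, l)) = q w := by
      rw [key, ← hn]
      simp only [hv, hl]
      rfl
    refine ⟨(v, l), ⟨?_, ?_⟩, ?_⟩
    · have hc := n.chain
      rw [← hl, List.isChain_map] at hc
      refine hc.imp ?_
      rintro ⟨a, x⟩ ⟨b, y⟩ h
      dsimp only at h ⊢
      rw [bu_inj] at h
      by_cases hab : a = b
      · exact Or.inl hab
      · have hm := fun hm => hab (h hm)
        cases a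
        · exact Or.inr (Or.inr ⟨rfl, hm⟩)
        · exact Or.inr (Or.inl ⟨rfl, hm⟩)
    · by_cases hl0 : l = []
      · right
        subst hl0
        intro hD
        refine h ⟨_, hD, ?_⟩
        rw [← hw, key]
        simp
      · exact Or.inl hl0
    · rw [map_mul, map_inv, hw]; simp

/-- The relators of the HNN presentation. -/
def hrel (s : FreeGroup B) (SX : Set B) (sh : B → B) : Set (FreeGroup (Option B)) :=
  {w | w = emb s ∨ ∃ b, b ∈ SX ∧ of none * of (some b) * (of none)⁻¹ * (of (some (sh b)))⁻¹ = w}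

theorem hnn_struct (s : FreeGroup B) (SX SY : Set B) (sh : B → B) (hsh : Function.Injective sh)
    (hshp : Primrec sh) (hSX : PrimrecPred (fun b => b ∈ SX))
    (hXY : ∀ b, b ∈ SX → sh b ∈ SY) (hYX : ∀ b ∈ SY, ∃ c ∈ SX, sh c = b)
    (hFX : Fr s SX) (hFY : Fr s SY) (hDX : De s SX) (hDY : De s SY) :
    ∃ (E : Type) (_ : Group E) (q : FreeGroup (Option B) →* E),
      (∀ v, q (emb v) = 1 ↔ v ∈ NC s) ∧
      (∀ b ∈ SX, q (of none) * q (of (some b)) * (q (of none))⁻¹ = q (of (some (sh b)))) ∧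
      (∀ (H : Type) [Group H] (f : FreeGroup (Option B) →* H), f (emb s) = 1 →
        (∀ b ∈ SX, f (of none) * f (of (some b)) * (f (of none))⁻¹ = f (of (some (sh b)))) →
        ∀ w, q w = 1 → f w = 1) ∧
      (∀ S : Set B, De s S → Sig (fun w => ¬ ∃ u ∈ FS S, q (emb u) = q w)) := by
  let p : FreeGroup B →* FreeGroup B ⧸ NC s := QuotientGroup.mk' (NC s)
  have hp : Function.Surjective p := QuotientGroup.mk'_surjective _
  have hp1 : ∀ v, p v = 1 ↔ v ∈ NC s := fun v => QuotientGroup.eq_one_iff v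
  have hdiv : ∀ u v, p u = p v ↔ u⁻¹ * v ∈ NC s := fun u v => QuotientGroup.eq
  let fX : FS SX →* FreeGroup B ⧸ NC s := p.comp (FS SX).subtype
  let fY : FS SX →* FreeGroup B ⧸ NC s := (p.comp (FreeGroup.map sh)).comp (FS SX).subtype
  have hfX : Function.Injective fX := by
    rw [injective_iff_map_eq_one]
    rintro ⟨w, hw⟩ h
    exact Subtype.ext (hFX w hw ((hp1 w).1 h))
  have hmap : ∀ w ∈ FS SX, FreeGroup.map sh w ∈ FS SY := by
    intro w hw
    refine map_FS ?_ hw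
    intro a ha
    simpa using of_mem_FS (hXY a ha)
  have hmap2 : ∀ w ∈ FS SY, ∃ u ∈ FS SX, FreeGroup.map sh u = w := by
    intro w hw
    have : (MonoidHom.id _) w ∈ (FS SX).map (FreeGroup.map sh) := by
      refine map_FS ?_ hw
      intro a ha
      obtain ⟨c, hc, rfl⟩ := hYX a ha
      exact ⟨of c, of_mem_FS hc, by simp⟩
    exact this
  have hfY : Function.Injective fY := by
    rw [injective_iff_map_eq_one]
    rintro ⟨w, hw⟩ h
    have := hFY _ (hmap w hw) ((hp1 _).1 h)
    refine Subtype.ext (FreeGroup.map_injective hsh ?_)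
    simpa using this
  let X := fX.range
  let Y := fY.range
  let eX : FS SX ≃* X := MonoidHom.ofInjective hfX
  let eY : FS SX ≃* Y := MonoidHom.ofInjective hfY
  let φ : X ≃* Y := eX.symm.trans eY
  have hφ : ∀ u : FS SX, (φ (eX u) : FreeGroup B ⧸ NC s) = p (FreeGroup.map sh (u : FreeGroup B)) := by
    intro u
    simp only [φ, MulEquiv.trans_apply, MulEquiv.symm_apply_apply]
    rfl
  let q : FreeGroup (Option B) →* HNNExtension (FreeGroup B ⧸ NC s) X Y φ :=
    FreeGroup.lift (fun o => o.elim HNNExtension.t (fun b => HNNExtension.of (p (of b))))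
  have hqt : q (of none) = HNNExtension.t := by simp [q]
  have hqb : ∀ v, q (emb v) = HNNExtension.of (p v) := by
    intro v
    have : q.comp emb = HNNExtension.of.comp p := by
      ext b; simp [q]
    exact DFunLike.congr_fun this v
  have hqb' : ∀ b, q (of (some b)) = HNNExtension.of (p (of b)) := by
    intro b; rw [← hqb]; simp
  have hrelq : ∀ b ∈ SX, q (of none) * q (of (some b)) * (q (of none))⁻¹ = q (of (some (sh b))) := by
    intro b hb
    rw [hqt, hqb', hqb']
    have h1 := hφ ⟨of b, of_mem_FS hb⟩
    rw [FreeGroup.map.of] at h1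
    rw [← h1, HNNExtension.equiv_eq_conj]
    rfl
  have huniv : ∀ (H : Type) [Group H] (f : FreeGroup (Option B) →* H), f (emb s) = 1 →
        (∀ b ∈ SX, f (of none) * f (of (some b)) * (f (of none))⁻¹ = f (of (some (sh b)))) →
        ∀ w, q w = 1 → f w = 1 := by
    intro H _ f h1 h2 w hw
    let f0 : FreeGroup B ⧸ NC s →* H := QuotientGroup.lift (NC s) (f.comp emb)
      (fun v hv => NC_ker _ h1 hv)
    have hf0 : ∀ v, f0 (p v) = f (emb v) := fun v => rfl
    let g : HNNExtension (FreeGroup B ⧸ NC s) X Y φ →* H := HNNExtension.lift f0 (f (of none)) (by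
      intro a
      obtain ⟨u, rfl⟩ := eX.surjective a
      rw [hφ]
      have h3 : ((eX u : X) : FreeGroup B ⧸ NC s) = p (u : FreeGroup B) := rfl
      rw [h3, hf0, hf0]
      obtain ⟨u, hu⟩ := u
      rw [← mul_inv_eq_iff_eq_mul]
      exact eqOn_FS (φ := (MulAut.conj (f (of none))).toMonoidHom.comp (f.comp emb))
        (ψ := (f.comp emb).comp (FreeGroup.map sh)) (fun a ha => by simpa using h2 a ha) hu)
    have hg : g.comp q = f := by
      ext o
      cases o with
      | none => simp [g, hqt]
      | some b => simp [g, hqb', hf0]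
    rw [← hg, MonoidHom.comp_apply, hw, map_one]
  have hker : Sig (fun w => q w = 1) := by
    have hK : Sig (fun w => w ∈ hrel s SX sh) := by
      refine Sig.or (Sig.of_prim (primrec_eq Primrec.id (Primrec.const _))) (Sig.ex ?_)
      refine Sig.and ((Sig.of_prim hSX).comp Primrec.snd) (Sig.of_prim (primrec_eq ?_ Primrec.fst))
      have e1 : Primrec (fun x : FreeGroup (Option B) × B => of (some x.2)) :=
        primrec_of.comp (Primrec.option_some.comp Primrec.snd)
      have e2 : Primrec (fun x : FreeGroup (Option B) × B => (of (some (sh x.2)))⁻¹) :=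
        primrec_inv.comp (primrec_of.comp (Primrec.option_some.comp (hshp.comp Primrec.snd)))
      exact primrec_mul.comp (primrec_mul.comp (primrec_mul.comp (Primrec.const _) e1)
        (Primrec.const _)) e2
    refine (sig_normalClosure hK).of_eq ?_
    intro w
    constructor
    · intro hw
      have : Subgroup.normalClosure (hrel s SX sh) ≤ q.ker := by
        refine Subgroup.normalClosure_le_normal ?_
        rintro _ (rfl | ⟨b, hb, rfl⟩)
        · exact (hqb s).trans (by rw [(hp1 s).2 (mem_NC s), map_one])
        · have := hrelq b hb
          change q _ = 1
          simp only [map_mul, map_inv]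
          rw [this, mul_inv_cancel]
      exact this hw
    · intro hw
      have hsub := Subgroup.subset_normalClosure (s := hrel s SX sh)
      have := huniv _ (QuotientGroup.mk' (Subgroup.normalClosure (hrel s SX sh)))
        ((QuotientGroup.eq_one_iff _).2 (hsub (Or.inl rfl))) (by
          intro b hb
          rw [← mul_inv_eq_one]
          simp only [← map_mul, ← map_inv]
          exact (QuotientGroup.eq_one_iff _).2 (hsub (Or.inr ⟨b, hb, rfl⟩))) w hw
      exact (QuotientGroup.eq_one_iff _).1 this
  have hinj : Function.Injective
      (HNNExtension.of : _ →* HNNExtension (FreeGroup B ⧸ NC s) X Y φ) :=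
    HNNExtension.of_injective _
  have hDe : ∀ S, De s S → Sig (fun v => p v ∉ (p '' (FS S : Set (FreeGroup B)))) := by
    intro S hS
    refine Sig.of_eq hS ?_
    intro w
    refine not_congr ?_
    constructor
    · rintro ⟨u, hu, h⟩
      exact ⟨u, hu, (hdiv u w).2 h⟩
    · rintro ⟨u, hu, h⟩
      exact ⟨u, hu, (hdiv u w).1 h⟩
  have hX : Sig (fun v => p v ∉ X) := by
    refine (hDe SX hDX).of_eq ?_
    intro v
    refine not_congr ?_
    constructor
    · rintro ⟨u, hu, h⟩
      exact ⟨⟨u, hu⟩, h⟩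
    · rintro ⟨⟨u, hu⟩, h⟩
      exact ⟨u, hu, h⟩
  have hY : Sig (fun v => p v ∉ Y) := by
    refine (hDe SY hDY).of_eq ?_
    intro v
    refine not_congr ?_
    constructor
    · rintro ⟨u, hu, h⟩
      obtain ⟨u', hu', rfl⟩ := hmap2 u hu
      exact ⟨⟨u', hu'⟩, h⟩
    · rintro ⟨⟨u, hu⟩, h⟩
      exact ⟨_, hmap u hu, h⟩
  refine ⟨HNNExtension (FreeGroup B ⧸ NC s) X Y φ, inferInstance, q, ?_, hrelq, huniv, ?_⟩
  · intro v
    rw [hqb, ← hp1, ← map_one (HNNExtension.of), hinj.eq_iff]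
  · intro S hS
    refine (sig_hnn p hp q hqt hqb hker hX hY _ (hDe S hS)).of_eq ?_
    intro w
    refine not_congr ?_
    constructor
    · rintro ⟨g, ⟨u, hu, rfl⟩, h⟩
      exact ⟨u, hu, (hqb u).trans h⟩
    · rintro ⟨u, hu, h⟩
      exact ⟨_, ⟨u, hu, rfl⟩, (hqb u).symm.trans h⟩

end hnn
end OneRel


/-! ## Rewriting and the HNN step -/

namespace OneRel
open FreeGroup (of mk)

theorem cyc_exists {A : Type} [DecidableEq A] (L : List (A × Bool)) :
    ∃ s g : FreeGroup A, FreeGroup.IsCyclicallyReduced s.toWord ∧ mk L = g * s * g⁻¹ ∧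
      s.toWord.Sublist L := by
  let R := FreeGroup.reduce L
  have hR : FreeGroup.IsReduced R := by
    have := FreeGroup.isReduced_toWord (x := mk L)
    simpa using this
  have hC := FreeGroup.reduceCyclically.isCyclicallyReduced hR
  have hE := FreeGroup.reduceCyclically.conj_conjugator_reduceCyclically R
  have hw : (mk (FreeGroup.reduceCyclically R)).toWord = FreeGroup.reduceCyclically R := by
    rw [FreeGroup.toWord_mk]; exact hC.isReduced.reduce_eq
  refine ⟨mk (FreeGroup.reduceCyclically R), mk (FreeGroup.reduceCyclically.conjugator R),
    ?_, ?_, ?_⟩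
  · rw [hw]; exact hC
  · rw [FreeGroup.inv_mk, FreeGroup.mul_mk, FreeGroup.mul_mk, hE]
    exact FreeGroup.reduce.self.symm
  · rw [hw]
    have h1 : R.Sublist L := FreeGroup.reduce.red.sublist
    have h2 : (FreeGroup.reduceCyclically R).Sublist R := by
      conv_rhs => rw [← hE]
      rw [List.append_assoc]
      exact (List.sublist_append_left _ _).trans (List.sublist_append_right _ _)
    exact h2.trans h1

theorem primrec_int_of_nat {f : ℤ → ℤ} {g : ℕ → ℕ} (hg : Primrec g)
    (h : ∀ i, Encodable.encode (f i) = g (Encodable.encode i)) : Primrec f := by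
  refine Primrec.encode_iff.1 ?_
  exact (hg.comp Primrec.encode).of_eq (fun i => (h i).symm)

theorem encode_ofNat (n : ℕ) : Encodable.encode (n : ℤ) = 2 * n := by
  change Equiv.intEquivNat (Int.ofNat n) = _
  simp [Equiv.intEquivNat, Equiv.intEquivNatSumNat, -Int.ofNat_eq_natCast]

theorem encode_negSucc (n : ℕ) : Encodable.encode (Int.negSucc n) = 2 * n + 1 := by
  change Equiv.intEquivNat (Int.negSucc n) = _
  simp [Equiv.intEquivNat, Equiv.intEquivNatSumNat]

theorem primrec_int_succ : Primrec (fun i : ℤ => i + 1) := by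
  have hg : Primrec (fun c : ℕ => if c % 2 = 0 then c + 2 else if c = 1 then 0 else c - 2) := by
    refine Primrec.ite ?_ ?_ (Primrec.ite ?_ (Primrec.const 0) ?_)
    · exact PrimrecRel.comp Primrec.eq (Primrec.nat_mod.comp Primrec.id (Primrec.const 2))
        (Primrec.const 0)
    · exact Primrec.nat_add.comp Primrec.id (Primrec.const 2)
    · exact PrimrecRel.comp Primrec.eq Primrec.id (Primrec.const 1)
    · exact Primrec.nat_sub.comp Primrec.id (Primrec.const 2)
  refine primrec_int_of_nat hg ?_
  rintro (n | n)
  · have h1 : Int.ofNat n + 1 = ((n + 1 : ℕ) : ℤ) := by simp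
    have h2 : Int.ofNat n = (n : ℤ) := rfl
    rw [h1, h2, encode_ofNat, encode_ofNat]
    simp; omega
  · rcases n with _ | n
    · have h1 : Int.negSucc 0 + 1 = ((0 : ℕ) : ℤ) := by decide
      rw [h1, encode_ofNat, encode_negSucc]
      simp
    · have h1 : Int.negSucc (n + 1) + 1 = Int.negSucc n := by omega
      rw [h1, encode_negSucc, encode_negSucc]
      rw [if_neg (by omega), if_neg (by omega)]; omega

theorem prim_mem_list {α : Type} [Primcodable α] [DecidableEq α] (l : List α) :
    PrimrecPred (fun a => a ∈ l) := by
  induction l with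
  | nil => exact (PrimrecPred.not (PrimrecRel.comp Primrec.eq Primrec.id Primrec.id)).of_eq (by simp)
  | cons b l ih =>
    exact (PrimrecPred.or (PrimrecRel.comp Primrec.eq Primrec.id (Primrec.const b)) ih).of_eq
      (by simp)

theorem prim_ne {α : Type} [Primcodable α] [DecidableEq α] (b : α) :
    PrimrecPred (fun a => a ∈ {c : α | c ≠ b}) :=
  PrimrecPred.not (PrimrecRel.comp Primrec.eq Primrec.id (Primrec.const b))

/-- `x` occurs in every conjugate of `r`. -/
def Ess {A : Type} (x : A) (r : FreeGroup A) : Prop :=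
  ∀ g : FreeGroup A, g * r * g⁻¹ ∉ FS {a | a ≠ x}

section rew
variable {A : Type}

/-- The rewriting map. -/
def Psi (t : A) (m : ℤ) : FreeGroup (A × ℤ) →* FreeGroup A :=
  FreeGroup.lift (fun b => of t ^ (b.2 - m) * of b.1 * (of t ^ (b.2 - m))⁻¹)

theorem Psi_of (t : A) (m : ℤ) (b : A × ℤ) :
    Psi t m (of b) = of t ^ (b.2 - m) * of b.1 * (of t ^ (b.2 - m))⁻¹ := by
  simp [Psi]

theorem Psi_shift (t : A) (m e : ℤ) (v : FreeGroup (A × ℤ)) :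
    Psi t m (FreeGroup.map (fun b => (b.1, b.2 + e)) v) =
      of t ^ e * Psi t m v * (of t ^ e)⁻¹ := by
  have : (Psi t m).comp (FreeGroup.map (fun b => (b.1, b.2 + e))) =
      (MulAut.conj (of t ^ e)).toMonoidHom.comp (Psi t m) := by
    ext b
    simp only [MonoidHom.comp_apply, FreeGroup.map.of, Psi_of, MulEquiv.coe_toMonoidHom,
      MulAut.conj_apply]
    rw [show b.2 + e - m = e + (b.2 - m) by ring, zpow_add]
    group
  exact DFunLike.congr_fun this v

theorem Psi_change (t : A) (m n : ℤ) (v : FreeGroup (A × ℤ)) :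
    Psi t m v = of t ^ (n - m) * Psi t n v * (of t ^ (n - m))⁻¹ := by
  have : (Psi t m) = (MulAut.conj (of t ^ (n - m))).toMonoidHom.comp (Psi t n) := by
    ext b
    simp only [MonoidHom.comp_apply, Psi_of, MulEquiv.coe_toMonoidHom,
      MulAut.conj_apply]
    rw [show b.2 - m = (n - m) + (b.2 - n) by ring, zpow_add]
    group
  exact DFunLike.congr_fun this v

theorem kill_Psi (t : A) (m : ℤ) {v : FreeGroup (A × ℤ)} (hv : v ∈ FS {b | b.1 ≠ t}) :
    kill {t} (Psi t m v) = 1 := by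
  refine eqOn_FS (φ := (kill {t}).comp (Psi t m)) (ψ := 1) ?_ hv
  intro b hb
  have h2 : kill {t} (of b.1) = 1 := kill_of_notMem (by simpa using hb)
  simp [Psi_of, h2]

theorem Psi_FS (t : A) (m : ℤ) {S : Set A} (ht : t ∈ S) {v : FreeGroup (A × ℤ)}
    (hv : v ∈ FS {b | b.1 ∈ S}) : Psi t m v ∈ FS S := by
  refine map_FS ?_ hv
  intro b hb
  rw [Psi_of]
  have h1 := zpow_mem (of_mem_FS ht) (b.2 - m)
  exact mul_mem (mul_mem h1 (of_mem_FS hb)) (inv_mem h1)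

variable [DecidableEq A]

theorem rewrite (t : A) (m : ℤ) (ψ : FreeGroup A →* FreeGroup A) (n : ℤ) (δ : A → ℤ)
    (ht : ψ (of t) = of t ^ n) (ha : ∀ a, a ≠ t → ψ (of a) = of a * of t ^ δ a)
    (L : List (A × Bool)) :
    ∃ L' : List ((A × ℤ) × Bool), (∀ p ∈ L', p.1.1 ≠ t ∧ ∃ b, (p.1.1, b) ∈ L) ∧
      L'.length ≤ (L.filter (fun p => decide (p.1 ≠ t))).length ∧
      ψ (mk L) = Psi t m (mk L') * kill {t} (ψ (mk L)) := by
  have hkt : ∀ e : ℤ, kill {t} (of t ^ e) = of t ^ e := by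
    intro e
    rw [map_zpow, kill_of_mem (Set.mem_singleton t)]
  induction L with
  | nil => exact ⟨[], by simp, by simp, by simp [← FreeGroup.one_eq_mk]⟩
  | cons p L ih =>
    obtain ⟨L', h1, h2, h3⟩ := ih
    have key : ∃ (l : List ((A × ℤ) × Bool)) (e : ℤ), (∀ q ∈ l, q.1.1 ≠ t ∧ q.1.1 = p.1) ∧
        l.length ≤ ([p].filter (fun p => decide (p.1 ≠ t))).length ∧
        ψ (mk [p]) = Psi t m (mk l) * of t ^ e := by
      obtain ⟨a, b⟩ := p
      by_cases hat : a = t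
      · subst hat
        cases b
        · refine ⟨[], -n, by simp, by simp, ?_⟩
          have : mk [(a, false)] = (of a)⁻¹ := rfl
          rw [this, map_inv, ht]
          simp [← FreeGroup.one_eq_mk]
        · refine ⟨[], n, by simp, by simp, ?_⟩
          have : mk [(a, true)] = of a := rfl
          rw [this, ht]
          simp [← FreeGroup.one_eq_mk]
      · cases b
        · refine ⟨[((a, m - δ a), false)], - δ a, by simp [hat], by simp [hat], ?_⟩
          have : mk [(a, false)] = (of a)⁻¹ := rfl
          have h' : mk [((a, m - δ a), false)] = (of (a, m - δ a))⁻¹ := rfl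
          rw [this, h', map_inv, ha a hat, map_inv, Psi_of]
          simp only
          rw [show m - δ a - m = - δ a by ring]
          group
        · refine ⟨[((a, m), true)], δ a, by simp [hat], by simp [hat], ?_⟩
          have : mk [(a, true)] = (of a) := rfl
          have h' : mk [((a, m), true)] = (of (a, m)) := rfl
          rw [this, h', ha a hat, Psi_of]
          simp
    obtain ⟨l, e, k1, k2, k3⟩ := key
    have hlt : mk l ∈ FS {b : A × ℤ | b.1 ≠ t} := mk_mem_FS (fun q hq => (k1 q hq).1)
    refine ⟨l ++ L'.map (fun p => ((p.1.1, p.1.2 + e), p.2)), ?_, ?_, ?_⟩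
    · intro q hq
      rcases List.mem_append.1 hq with hq | hq
      · obtain ⟨q1, q2⟩ := k1 q hq
        exact ⟨q1, p.2, by rw [q2]; exact List.mem_cons_self⟩
      · obtain ⟨q', hq', rfl⟩ := List.mem_map.1 hq
        obtain ⟨q1, b, q2⟩ := h1 q' hq'
        exact ⟨q1, b, List.mem_cons_of_mem _ q2⟩
    · have : p :: L = [p] ++ L := rfl
      rw [this, List.filter_append, List.length_append, List.length_append, List.length_map]
      omega
    · have e1 : mk (p :: L) = mk [p] * mk L := by simp [FreeGroup.mul_mk]
      have e2 : mk (L'.map (fun p => ((p.1.1, p.1.2 + e), p.2))) =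
          FreeGroup.map (fun b => (b.1, b.2 + e)) (mk L') := by
        rw [FreeGroup.map.mk]
      have e3 : kill {t} (ψ (mk [p])) = of t ^ e := by
        rw [k3, map_mul, kill_Psi t m hlt, hkt, one_mul]
      rw [e1, map_mul, map_mul, e3, ← FreeGroup.mul_mk, map_mul, e2, Psi_shift]
      nth_rewrite 1 [h3]
      rw [k3]
      group

theorem rewrite_elt (t : A) (m : ℤ) {S : Set A} {w : FreeGroup A} (hw : w ∈ FS S) :
    ∃ v ∈ FS {b : A × ℤ | b.1 ≠ t ∧ b.1 ∈ S}, w = Psi t m v * kill {t} w := by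
  obtain ⟨L, rfl, hL⟩ := FS_exists_list hw
  obtain ⟨L', h1, -, h3⟩ := rewrite t m (MonoidHom.id _) 1 (fun _ => 0) (by simp) (by simp) L
  refine ⟨mk L', mk_mem_FS ?_, h3⟩
  intro p hp
  obtain ⟨q1, b, q2⟩ := h1 p hp
  exact ⟨q1, hL _ q2⟩

end rew
end OneRel


namespace OneRel
open FreeGroup (of mk)

section step
variable {A : Type} [Primcodable A] [DecidableEq A]

/-- The induction hypothesis for words of length less than `N`. -/
def Good (A : Type) [Primcodable A] [DecidableEq A] (N : ℕ) : Prop :=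
  ∀ s : FreeGroup A, FreeGroup.IsCyclicallyReduced s.toWord → s.toWord.length < N →
    ∀ b ∈ s.toWord, Fr s {c | c ≠ b.1} ∧ De s {c | c ≠ b.1}

theorem zpow_shift {E : Type} [Group E] (T : E) (f : ℤ → E) (i : ℤ) (k : ℕ)
    (h : ∀ j, i ≤ j → j < i + k → T * f j * T⁻¹ = f (j + 1)) :
    T ^ k * f i * (T ^ k)⁻¹ = f (i + k) := by
  induction k with
  | zero => simp
  | succ k ih =>
    have h1 := ih (fun j h1 h2 => h j h1 (by push_cast; omega))
    have h2 := h (i + k) (by omega) (by push_cast; omega)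
    rw [← h1] at h2
    rw [show i + ((k + 1 : ℕ) : ℤ) = i + k + 1 by push_cast; ring, ← h2, pow_succ']
    group

theorem hnn_step (t x : A) (htx : t ≠ x) (r : FreeGroup A) (N : ℕ) (IH : Good (A × ℤ) N)
    (L : List ((A × ℤ) × Bool)) (hL : ∀ p ∈ L, p.1.1 ≠ t) (hlen : L.length < N)
    (hr : r = Psi t 0 (mk L)) (hEx : Ess x r) :
    (Fr r {a | a ≠ x} ∧ De r {a | a ≠ x}) ∧
      (Ess t r → Fr r {a | a ≠ t} ∧ De r {a | a ≠ t}) := by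
  obtain ⟨s, g, hcyc, hLs, hsub⟩ := cyc_exists L
  have hIH := IH s hcyc (lt_of_le_of_lt hsub.length_le hlen)
  have hst : ∀ p ∈ s.toWord, p.1.1 ≠ t := fun p hp => hL p (hsub.subset hp)
  -- conjugacy
  have hconj : ∀ m : ℤ, ∃ h, r = h * Psi t m s * h⁻¹ := by
    intro m
    refine ⟨of t ^ m * Psi t m g, ?_⟩
    rw [hr, hLs, Psi_change t 0 m]
    simp only [map_mul, map_inv, sub_zero]
    group
  have hconj' : ∀ m : ℤ, ∃ h, h * r * h⁻¹ = Psi t m s := by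
    intro m
    obtain ⟨h, hh⟩ := hconj m
    refine ⟨h⁻¹, ?_⟩
    rw [hh]; group
  have hFS : ∀ S : Set (A × ℤ), (∀ p ∈ s.toWord, p.1 ∈ S) → s ∈ FS S := by
    intro S hS
    have := mk_mem_FS hS
    rwa [FreeGroup.mk_toWord] at this
  -- the indices of `x`
  let I : Finset ℤ := (s.toWord.toFinset.filter (fun p => p.1.1 = x)).image (fun p => p.1.2)
  have hImem : ∀ i, i ∈ I → ∃ b, ((x, i), b) ∈ s.toWord := by
    intro i hi
    obtain ⟨⟨⟨a, j⟩, b⟩, hp, rfl⟩ := Finset.mem_image.1 hi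
    obtain ⟨hp1, rfl⟩ := Finset.mem_filter.1 hp
    exact ⟨b, List.mem_toFinset.1 hp1⟩
  have hImem' : ∀ p ∈ s.toWord, p.1.1 = x → p.1.2 ∈ I := by
    intro p hp hx
    exact Finset.mem_image.2 ⟨p, Finset.mem_filter.2 ⟨List.mem_toFinset.2 hp, hx⟩, rfl⟩
  have hIne : I.Nonempty := by
    by_contra hI
    rw [Finset.not_nonempty_iff_eq_empty] at hI
    obtain ⟨h, hh⟩ := hconj' 0
    refine hEx h ?_
    rw [hh]
    refine Psi_FS t 0 (S := {a | a ≠ x}) htx (hFS _ ?_)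
    intro p hp hx
    have := hImem' p hp hx
    rw [hI] at this
    simp at this
  obtain ⟨m, hm⟩ : ∃ m, m = I.min' hIne := ⟨_, rfl⟩
  obtain ⟨M, hM⟩ : ∃ M, M = I.max' hIne := ⟨_, rfl⟩
  have hmI : m ∈ I := hm ▸ I.min'_mem hIne
  have hMI : M ∈ I := hM ▸ I.max'_mem hIne
  have hmle : ∀ i ∈ I, m ≤ i := fun i hi => hm ▸ I.min'_le i hi
  have hMle : ∀ i ∈ I, i ≤ M := fun i hi => hM ▸ I.le_max' i hi
  obtain ⟨bm, hbm⟩ := hImem m hmI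
  obtain ⟨bM, hbM⟩ := hImem M hMI
  -- sub-generating sets
  have primfst : Primrec (fun b : A × ℤ => b.1) := Primrec.fst
  have primX : ∀ l : List ℤ, PrimrecPred (fun b : A × ℤ => b.1 ≠ x ∨ b.2 ∈ l) := fun l =>
    PrimrecPred.or (PrimrecPred.not (PrimrecRel.comp Primrec.eq primfst (Primrec.const x)))
      ((prim_mem_list l).comp Primrec.snd)
  let SX : Set (A × ℤ) := {b | b.1 = x → m ≤ b.2 ∧ b.2 < M}
  let SY : Set (A × ℤ) := {b | b.1 = x → m < b.2 ∧ b.2 ≤ M}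
  have hSX : PrimrecPred (fun b => b ∈ SX) := by
    refine (primX (Finset.Ico m M).toList).of_eq ?_
    intro b
    simp only [Finset.mem_toList, Finset.mem_Ico, SX, Set.mem_ofPred_eq]
    tauto
  have hSY : PrimrecPred (fun b => b ∈ SY) := by
    refine (primX (Finset.Ioc m M).toList).of_eq ?_
    intro b
    simp only [Finset.mem_toList, Finset.mem_Ioc, SY, Set.mem_ofPred_eq]
    tauto
  have goodX := good_mono (prim_ne (x, M)) hSX (by
    rintro b hb rfl
    have := (hb rfl).2
    simp at this) (hIH _ hbM).1 (hIH _ hbM).2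
  have goodY := good_mono (prim_ne (x, m)) hSY (by
    rintro b hb rfl
    have := (hb rfl).1
    simp at this) (hIH _ hbm).1 (hIH _ hbm).2
  let sh : A × ℤ → A × ℤ := fun b => (b.1, b.2 + 1)
  obtain ⟨E, _, q, hq1, hq2, hq3, hq4⟩ := hnn_struct s SX SY sh
    (by
      rintro ⟨a, i⟩ ⟨c, j⟩ h
      simp only [sh, Prod.mk.injEq, add_left_inj] at h
      rw [h.1, h.2])
    (Primrec.pair Primrec.fst (primrec_int_succ.comp Primrec.snd)) hSX
    (by
      intro b hb hx
      have := hb hx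
      simp only [sh]
      omega)
    (by
      rintro ⟨a, i⟩ hb
      refine ⟨(a, i - 1), ?_, by simp [sh]⟩
      intro hx
      have := hb hx
      simp only at this ⊢
      omega)
    goodX.1 goodY.1 goodX.2 goodY.2
  -- the embedding of the original free group
  let j : FreeGroup A →* FreeGroup (Option (A × ℤ)) :=
    FreeGroup.lift (fun a => if a = t then of none else of (some (a, m)))
  have hjt : j (of t) = of none := by simp [j]
  have hja : ∀ a, a ≠ t → j (of a) = of (some (a, m)) := by intro a h; simp [j, h]
  have hjp : Primrec j := by
    refine primrec_hom _ ?_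
    refine (Primrec.ite (PrimrecRel.comp Primrec.eq Primrec.id (Primrec.const t))
      (Primrec.const (of none)) (primrec_of.comp (Primrec.option_some.comp
        (Primrec.pair Primrec.id (Primrec.const m))))).of_eq ?_
    intro a
    simp [j]
  let T : Set (A × ℤ) := {b | b.1 ≠ t ∧ (b.1 = x → m ≤ b.2 ∧ b.2 ≤ M)}
  have hqj : ∀ v ∈ FS T, q (j (Psi t m v)) = q (emb v) := by
    intro v hv
    refine eqOn_FS (φ := (q.comp j).comp (Psi t m)) (ψ := q.comp emb) ?_ hv
    rintro ⟨a, i⟩ ⟨hb1, hb2⟩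
    simp only at hb1 hb2
    simp only [MonoidHom.comp_apply, Psi_of, map_mul, map_zpow, map_inv, hjt, hja a hb1,
      FreeGroup.map.of]
    rcases le_total m i with hmi | hmi
    · obtain ⟨k, rfl⟩ := Int.le.dest hmi
      have := zpow_shift (q (of none)) (fun i => q (of (some (a, i)))) m k (by
        intro j' h1 h2
        refine hq2 (a, j') ?_
        intro hx
        have := hb2 hx
        simp only at this ⊢
        omega)
      rw [← this]
      simp
    · obtain ⟨k, rfl⟩ := Int.le.dest hmi
      have := zpow_shift (q (of none)) (fun i => q (of (some (a, i)))) i k (by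
        intro j' h1 h2
        refine hq2 (a, j') ?_
        intro hx
        have := hb2 hx
        simp only at this ⊢
        omega)
      rw [← this]
      simp only [sub_add_cancel_left, zpow_neg, zpow_natCast]
      group
  have hsT : s ∈ FS T := by
    refine hFS T ?_
    intro p hp
    refine ⟨hst p hp, fun hx => ⟨hmle _ (hImem' p hp hx), hMle _ (hImem' p hp hx)⟩⟩
  obtain ⟨h0, hh0⟩ := hconj m
  have hqr : (q.comp j) r = 1 := by
    rw [hh0]
    simp only [map_mul, map_inv, MonoidHom.comp_apply]
    rw [hqj s hsT, (hq1 s).2 (mem_NC s)]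
    simp
  have hqNC : ∀ w ∈ NC r, q (j w) = 1 := fun w hw => NC_ker (q.comp j) hqr hw
  -- the retraction
  let ρ : FreeGroup (Option (A × ℤ)) →* FreeGroup A :=
    FreeGroup.lift (fun o => o.elim (of t) (fun b => Psi t m (of b)))
  have hρt : ρ (of none) = of t := by simp [ρ]
  have hρb : ∀ b, ρ (of (some b)) = Psi t m (of b) := by intro b; simp [ρ]
  have hρe : ∀ v, ρ (emb v) = Psi t m v := by
    intro v
    have : ρ.comp emb = Psi t m := by
      ext b; simp [hρb]
    exact DFunLike.congr_fun this v
  have hρj : ∀ w, ρ (j w) = w := by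
    intro w
    have : ρ.comp j = MonoidHom.id _ := by
      ext a
      by_cases ha : a = t
      · subst ha; simp [hjt, hρt]
      · simp [hja a ha, hρb, Psi_of]
    exact DFunLike.congr_fun this w
  have hNCr : NC r = NC (Psi t m s) := by rw [hh0, NC_conj]
  have hρ : ∀ w, q w = 1 → ρ w ∈ NC r := by
    intro w hw
    have := hq3 _ ((QuotientGroup.mk' (NC r)).comp ρ) (by
      rw [MonoidHom.comp_apply, hρe]
      exact (QuotientGroup.eq_one_iff _).2 (hNCr ▸ mem_NC _)) (by
      intro b hb
      simp only [MonoidHom.comp_apply, hρt, hρb, Psi_of, ← map_mul, ← map_inv, sh]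
      congr 1
      rw [show b.2 + 1 - m = 1 + (b.2 - m) by ring, zpow_add]
      group) w hw
    exact (QuotientGroup.eq_one_iff _).1 this
  have hρ' : ∀ v w, q (emb v) = q w → (Psi t m v)⁻¹ * ρ w ∈ NC r := by
    intro v w h
    have h1 : q ((emb v)⁻¹ * w) = 1 := by rw [map_mul, map_inv, h, inv_mul_cancel]
    have h2 := hρ _ h1
    rwa [map_mul, map_inv, hρe] at h2
  have hkr : ∀ w ∈ NC r, kill {t} w = 1 := by
    intro w hw
    refine NC_ker (kill {t}) ?_ hw
    rw [hr]
    exact kill_Psi t 0 (mk_mem_FS hL)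
  have hkp : Primrec (kill {t}) := by
    refine primrec_kill ?_
    exact (PrimrecRel.comp Primrec.eq Primrec.id (Primrec.const t)).of_eq (fun a => Iff.rfl)
  refine ⟨⟨?_, ?_⟩, ?_⟩
  · -- Freiheitssatz for `x`
    have hF : Fr s {b : A × ℤ | b.1 ≠ x} := fun w hw =>
      (hIH _ hbm).1 w (FS_mono (by rintro b hb rfl; exact hb rfl) hw)
    intro w hw hwr
    obtain ⟨v, hv, hwv⟩ := rewrite_elt t m hw
    rw [hkr w hwr, mul_one] at hwv
    have h1 : q (emb v) = 1 := by
      rw [← hqj v (FS_mono (by rintro b ⟨hb1, hb2⟩; exact ⟨hb1, fun h => absurd h hb2⟩) hv),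
        ← hwv]
      exact hqNC w hwr
    have := hF v (FS_mono (by rintro b ⟨hb1, hb2⟩; exact hb2) hv) ((hq1 v).1 h1)
    rw [hwv, this, map_one]
  · -- decidability for `x`
    have hD : De s {b : A × ℤ | b.1 ≠ x} := (good_mono (prim_ne (x, m))
      (PrimrecPred.not (PrimrecRel.comp Primrec.eq primfst (Primrec.const x)))
      (by rintro b hb rfl; exact hb rfl) (hIH _ hbm).1 (hIH _ hbm).2).2
    have h1 := (hq4 _ hD).comp (hjp.comp (primrec_mul.comp Primrec.id (primrec_inv.comp hkp)))
    refine h1.of_eq ?_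
    intro w
    refine not_congr ?_
    have hkx : kill {t} w ∈ FS {a | a ≠ x} :=
      FS_mono (by rintro a rfl; exact htx) (kill_mem {t} w)
    constructor
    · rintro ⟨u, hu, huw⟩
      have h2 := hρ' u _ huw
      rw [hρj] at h2
      refine ⟨Psi t m u * kill {t} w, mul_mem (Psi_FS t m (S := {a | a ≠ x}) htx hu) hkx, ?_⟩
      have h3 := Subgroup.normalClosure_normal.conj_mem _ h2 (kill {t} w)⁻¹
      simpa [mul_assoc] using h3
    · rintro ⟨u, hu, huw⟩
      obtain ⟨v, hv, huv⟩ := rewrite_elt t m hu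
      have hk : kill {t} u = kill {t} w := by
        have := hkr _ huw
        rwa [map_mul, map_inv, inv_mul_eq_one] at this
      have hjuw : q (j u) = q (j w) := by
        have := hqNC _ huw
        rwa [map_mul, map_mul, map_inv, map_inv, inv_mul_eq_one] at this
      refine ⟨v, FS_mono (by rintro b ⟨hb1, hb2⟩; exact hb2) hv, ?_⟩
      rw [← hqj v (FS_mono (by rintro b ⟨hb1, hb2⟩; exact ⟨hb1, fun h => absurd h hb2⟩) hv)]
      have : Psi t m v = u * (kill {t} u)⁻¹ := eq_mul_inv_of_mul_eq huv.symm
      rw [this, hk]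
      simp only [map_mul, hjuw, id]
  · -- the stable letter
    intro hEt
    let Z : Set (A × ℤ) := {b | b.1 ≠ t ∧ b.2 = m}
    have hZ : PrimrecPred (fun b => b ∈ Z) :=
      PrimrecPred.and (PrimrecPred.not (PrimrecRel.comp Primrec.eq primfst (Primrec.const t)))
        (PrimrecRel.comp Primrec.eq Primrec.snd (Primrec.const m))
    have hex : ∃ p ∈ s.toWord, p.1 ∉ Z := by
      by_contra hno
      push Not at hno
      obtain ⟨h, hh⟩ := hconj' m
      refine hEt h ?_
      rw [hh]
      refine map_FS ?_ (hFS Z hno)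
      rintro ⟨a, i⟩ ⟨hb1, hb2⟩
      simp only at hb1 hb2
      rw [Psi_of]
      simp only [hb2, sub_self, zpow_zero, one_mul, inv_one, mul_one]
      exact of_mem_FS hb1
    obtain ⟨p, hp, hpZ⟩ := hex
    obtain ⟨hF, hD⟩ := good_mono (prim_ne p.1) hZ (by rintro b hb rfl; exact hpZ hb)
      (hIH _ hp).1 (hIH _ hp).2
    let ι : A → A × ℤ := fun a => (a, m)
    have hι : ∀ u ∈ FS {a : A | a ≠ t}, FreeGroup.map ι u ∈ FS Z := by
      intro u hu
      refine map_FS ?_ hu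
      intro a ha
      rw [FreeGroup.map.of]
      exact of_mem_FS ⟨ha, rfl⟩
    have hιj : ∀ u ∈ FS {a : A | a ≠ t}, emb (FreeGroup.map ι u) = j u := by
      intro u hu
      refine eqOn_FS (φ := emb.comp (FreeGroup.map ι)) (ψ := j) ?_ hu
      intro a ha
      simp [hja a ha, ι]
    refine ⟨?_, ?_⟩
    · intro w hw hwr
      have h1 : q (emb (FreeGroup.map ι w)) = 1 := by
        rw [hιj w hw]; exact hqNC w hwr
      have h2 := hF _ (hι w hw) ((hq1 _).1 h1)
      refine FreeGroup.map_injective (f := ι) (fun a b h => congrArg Prod.fst h) ?_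
      rw [h2, map_one]
    · refine ((hq4 Z hD).comp hjp).of_eq ?_
      intro w
      refine not_congr ?_
      constructor
      · rintro ⟨u, hu, huw⟩
        have h2 := hρ' u _ huw
        rw [hρj] at h2
        refine ⟨Psi t m u, ?_, h2⟩
        refine map_FS ?_ hu
        rintro ⟨a, i⟩ ⟨hb1, hb2⟩
        simp only at hb1 hb2
        rw [Psi_of]
        simp only [hb2, sub_self, zpow_zero, one_mul, inv_one, mul_one]
        exact of_mem_FS hb1
      · rintro ⟨u, hu, huw⟩
        have hjuw : q (j u) = q (j w) := by
          have := hqNC _ huw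
          rwa [map_mul, map_mul, map_inv, map_inv, inv_mul_eq_one] at this
        exact ⟨_, hι u hu, by rw [hιj u hu, hjuw]⟩

end step
end OneRel


namespace OneRel
open FreeGroup (of mk)

section cyc
variable {A : Type} [DecidableEq A]

/-- Number of occurrences of `x` in the reduced word. -/
def cnt (x : A) (w : FreeGroup A) : ℕ := w.toWord.countP (fun p => decide (p.1 = x))

theorem cnt_mul (x : A) (u v : FreeGroup A) : cnt x (u * v) ≤ cnt x u + cnt x v := by
  have := (FreeGroup.toWord_mul_sublist u v).countP_le (p := fun p => decide (p.1 = x))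
  rwa [List.countP_append] at this

theorem cnt_FS (x : A) {w : FreeGroup A} (hw : w ∈ FS {a | a ≠ x}) : cnt x w = 0 := by
  obtain ⟨L, rfl, hL⟩ := FS_exists_list hw
  have h1 : (FreeGroup.reduce L).Sublist L := FreeGroup.reduce.red.sublist
  have h2 := h1.countP_le (p := fun p => decide (p.1 = x))
  have h3 : L.countP (fun p => decide (p.1 = x)) = 0 := by
    rw [List.countP_eq_zero]
    intro p hp
    simpa using hL p hp
  rw [cnt, FreeGroup.toWord_mk]
  omega

theorem cyc_ess {r : FreeGroup A} (hr : FreeGroup.IsCyclicallyReduced r.toWord) {p : A × Bool}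
    (hp : p ∈ r.toWord) : Ess p.1 r := by
  intro g hg
  let n := cnt p.1 g⁻¹ + cnt p.1 g + 1
  have h1 : cnt p.1 (r ^ n) = n * cnt p.1 r := by
    rw [cnt, FreeGroup.toWord_pow, (hr.flatten_replicate n).isReduced.reduce_eq, List.countP_flatten]
    simp [cnt]
  have h2 : 1 ≤ cnt p.1 r := by
    rw [cnt, Nat.one_le_iff_ne_zero]
    intro h
    rw [List.countP_eq_zero] at h
    simpa using h p hp
  have h3 : r ^ n = g⁻¹ * (g * r * g⁻¹) ^ n * g := by
    rw [conj_pow]; group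
  have h4 : cnt p.1 (r ^ n) ≤ cnt p.1 g⁻¹ + 0 + cnt p.1 g := by
    rw [h3]
    refine (cnt_mul _ _ _).trans ?_
    have := cnt_mul p.1 g⁻¹ ((g * r * g⁻¹) ^ n)
    rw [cnt_FS _ (pow_mem hg n)] at this
    omega
  have h5 : n * 1 ≤ n * cnt p.1 r := Nat.mul_le_mul_left _ h2
  omega

end cyc

section exps
variable {A : Type} [DecidableEq A]

/-- Exponent sum. -/
def ex (a : A) : FreeGroup A →* Multiplicative ℤ :=
  FreeGroup.lift (fun c => if c = a then Multiplicative.ofAdd 1 else 1)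

theorem kill_eq_ex (a : A) (w : FreeGroup A) : kill {a} w = of a ^ (ex a w).toAdd := by
  have : kill {a} = (zpowersHom _ (of a)).comp (ex a) := by
    ext c
    by_cases h : c = a
    · subst h
      rw [kill_of_mem (Set.mem_singleton c)]
      simp [ex]
    · rw [kill_of_notMem (by simpa using h)]
      simp [ex, h]
  rw [this]
  simp

theorem ex_FS {a : A} {S : Set A} (h : a ∉ S) {w : FreeGroup A} (hw : w ∈ FS S) : ex a w = 1 := by
  refine eqOn_FS (ψ := 1) ?_ hw
  intro c hc
  have : c ≠ a := fun h' => h (h' ▸ hc)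
  simp [ex, this]

end exps

section act
variable {A Ω : Type} [Primcodable A] [DecidableEq A] [Primcodable Ω]

theorem primrec_act (act : FreeGroup A →* Equiv.Perm Ω)
    (h1 : Primrec (fun z : A × Ω => act (of z.1) z.2))
    (h2 : Primrec (fun z : A × Ω => (act (of z.1))⁻¹ z.2)) (ω : Ω) :
    Primrec (fun w => act w ω) := by
  have h3 : Primrec (fun w : FreeGroup A => w.toWord.foldr
      (fun p z => bif p.2 then act (of p.1) z else (act (of p.1))⁻¹ z) ω) := by
    refine Primrec.list_foldr (primrec_toWord (α := A)) (Primrec.const ω)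
      (h := fun _ q => bif q.1.2 then act (of q.1.1) q.2 else (act (of q.1.1))⁻¹ q.2) ?_
    refine Primrec.cond ?_ ?_ ?_
    · exact Primrec.snd.comp (Primrec.fst.comp Primrec.snd)
    · exact h1.comp (Primrec.pair (Primrec.fst.comp (Primrec.fst.comp Primrec.snd))
        (Primrec.snd.comp Primrec.snd))
    · exact h2.comp (Primrec.pair (Primrec.fst.comp (Primrec.fst.comp Primrec.snd))
        (Primrec.snd.comp Primrec.snd))
  refine h3.of_eq ?_
  intro w
  have : ∀ L : List (A × Bool), L.foldr
      (fun p z => bif p.2 then act (of p.1) z else (act (of p.1))⁻¹ z) ω = act (mk L) ω := by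
    intro L
    induction L with
    | nil => simp [← FreeGroup.one_eq_mk]
    | cons p L ih =>
      have e1 : mk (p :: L) = mk [p] * mk L := by simp [FreeGroup.mul_mk]
      rw [List.foldr_cons, ih, e1, map_mul, Equiv.Perm.mul_apply]
      obtain ⟨a, b⟩ := p
      cases b
      · have : mk [(a, false)] = (of a)⁻¹ := rfl
        rw [this, map_inv]; rfl
      · rfl
  rw [this, FreeGroup.mk_toWord]

end act

section case0
variable {A : Type}

/-- Cyclic shift. -/
def cycPerm (k : ℕ) (Γ : Type) : Equiv.Perm (Γ × Fin (k + 1)) where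
  toFun z := (z.1, z.2 + 1)
  invFun z := (z.1, z.2 - 1)
  left_inv z := by simp
  right_inv z := by simp

/-- Multiplication by a letter depending on the state. -/
def letPerm (k : ℕ) (c : A) : Equiv.Perm (FreeGroup (A × Fin (k + 1)) × Fin (k + 1)) where
  toFun z := (of (c, z.2) * z.1, z.2)
  invFun z := ((of (c, z.2))⁻¹ * z.1, z.2)
  left_inv z := by simp
  right_inv z := by simp

theorem cycPerm_pow (k : ℕ) (Γ : Type) : (cycPerm k Γ) ^ (k + 1) = 1 := by
  have h : ∀ (j : ℕ) (z : Γ × Fin (k + 1)), ((cycPerm k Γ) ^ j) z = (z.1, z.2 + j • 1) := by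
    intro j
    induction j with
    | zero => simp
    | succ j ih =>
      intro z
      rw [pow_succ', Equiv.Perm.mul_apply, ih, succ_nsmul]
      simp [cycPerm, add_assoc]
  ext1 z
  rw [h]
  have := card_nsmul_eq_zero (x := (1 : Fin (k + 1)))
  rw [Fintype.card_fin] at this
  simp [this]

variable [Primcodable A] [DecidableEq A]

/-- The action for the relator `x ^ n`. -/
def act0 (k : ℕ) (x : A) : FreeGroup A →* Equiv.Perm (FreeGroup (A × Fin (k + 1)) × Fin (k + 1)) :=
  FreeGroup.lift (fun a => if a = x then cycPerm k _ else letPerm k a)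

theorem act0_iff (k : ℕ) (x : A) (w : FreeGroup A) :
    w ∈ NC (of x ^ (k + 1)) ↔ act0 k x w (1, 0) = (1, 0) := by
  constructor
  · intro hw
    have : act0 k x w = 1 := by
      refine NC_ker _ ?_ hw
      rw [map_pow]
      simp [act0, cycPerm_pow]
    rw [this]; rfl
  · intro hw
    let N := NC (of x ^ (k + 1))
    let π : FreeGroup A →* FreeGroup A ⧸ N := QuotientGroup.mk' N
    have hπ : π (of x) ^ (k + 1) = 1 := by
      rw [← map_pow]
      exact (QuotientGroup.eq_one_iff _).2 (mem_NC _)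
    let Θ : FreeGroup (A × Fin (k + 1)) →* FreeGroup A ⧸ N := FreeGroup.lift
      (fun c => (π (of x) ^ (c.2 : ℕ))⁻¹ * π (of c.1) * π (of x) ^ (c.2 : ℕ))
    let val : FreeGroup (A × Fin (k + 1)) × Fin (k + 1) → FreeGroup A ⧸ N :=
      fun z => π (of x) ^ (z.2 : ℕ) * Θ z.1
    have hgen : ∀ a z, val (act0 k x (of a) z) = π (of a) * val z := by
      intro a z
      by_cases ha : a = x
      · subst ha
        simp only [act0, FreeGroup.lift_apply_of, if_true, cycPerm, Equiv.coe_fn_mk, val]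
        rw [← mul_assoc, ← pow_succ', Fin.val_add, pow_eq_pow_mod (z.2.val + 1) hπ]
        congr 2
        simp
      · simp only [act0, FreeGroup.lift_apply_of, if_neg ha, letPerm, Equiv.coe_fn_mk, val,
          map_mul, Θ]
        group
    have hall : ∀ w z, val (act0 k x w z) = π w * val z := by
      intro w
      induction w using FreeGroup.induction_on with
      | C1 => simp
      | of a => exact hgen a
      | inv_of a _ =>
        intro z
        have := hgen a ((act0 k x (of a))⁻¹ z)
        rw [show (act0 k x (of a)) ((act0 k x (of a))⁻¹ z) = z from Equiv.apply_symm_apply _ _] at this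
        rw [this, map_inv, map_inv]
        simp
      | mul u v hu hv =>
        intro z
        rw [map_mul, Equiv.Perm.mul_apply, hu, hv, map_mul, mul_assoc]
    have h1 := hall w (1, 0)
    rw [hw] at h1
    have h2 : π w = 1 := by simpa using h1
    exact (QuotientGroup.eq_one_iff _).1 h2

theorem primrec_act0 (k : ℕ) (x : A) : Primrec (fun w => act0 k x w (1, 0)) := by
  have e0 : PrimrecPred (fun z : A × (FreeGroup (A × Fin (k + 1)) × Fin (k + 1)) => z.1 = x) :=
    PrimrecRel.comp Primrec.eq Primrec.fst (Primrec.const x)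
  have e1 : Primrec (fun z : A × (FreeGroup (A × Fin (k + 1)) × Fin (k + 1)) => z.2.1) :=
    Primrec.fst.comp Primrec.snd
  have e2 : Primrec (fun z : A × (FreeGroup (A × Fin (k + 1)) × Fin (k + 1)) => z.2.2) :=
    Primrec.snd.comp Primrec.snd
  have e3 : Primrec (fun z : A × (FreeGroup (A × Fin (k + 1)) × Fin (k + 1)) => of (z.1, z.2.2)) :=
    primrec_of.comp (Primrec.pair Primrec.fst e2)
  refine primrec_act _ ?_ ?_ _
  · refine (Primrec.ite e0 (Primrec.pair e1 ((Primrec.dom_finite (fun i : Fin (k + 1) => i + 1)).comp e2))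
      (Primrec.pair (primrec_mul.comp e3 e1) e2)).of_eq ?_
    intro z
    simp only [act0, FreeGroup.lift_apply_of]
    split_ifs <;> rfl
  · refine (Primrec.ite e0 (Primrec.pair e1 ((Primrec.dom_finite (fun i : Fin (k + 1) => i - 1)).comp e2))
      (Primrec.pair (primrec_mul.comp (primrec_inv.comp e3) e1) e2)).of_eq ?_
    intro z
    simp only [act0, FreeGroup.lift_apply_of]
    split_ifs <;> rfl

theorem case0 (x : A) (r : FreeGroup A) (hr1 : r ≠ 1) (hr : r ∈ FS {x}) :
    Fr r {a | a ≠ x} ∧ De r {a | a ≠ x} := by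
  have h1 : kill {x} r = r := kill_eq_self hr
  rw [kill_eq_ex] at h1
  generalize (ex x r).toAdd = e at h1
  have he : e ≠ 0 := by
    rintro rfl
    exact hr1 (by simpa using h1.symm)
  obtain ⟨k, hk⟩ : ∃ k : ℕ, NC r = NC (of x ^ (k + 1)) := by
    obtain ⟨n, hn | hn⟩ := Int.eq_nat_or_neg e
    · obtain ⟨k, rfl⟩ : ∃ k, n = k + 1 := ⟨n - 1, by omega⟩
      refine ⟨k, ?_⟩
      rw [← h1, hn, zpow_natCast]
    · obtain ⟨k, rfl⟩ : ∃ k, n = k + 1 := ⟨n - 1, by omega⟩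
      refine ⟨k, ?_⟩
      rw [← h1, hn, zpow_neg, zpow_natCast, NC_inv]
  have hkr : kill {a | a ≠ x} r = 1 := kill_eq_one (by simp) hr
  refine ⟨?_, ?_⟩
  · intro w hw hwr
    have := NC_ker _ hkr hwr
    rwa [kill_eq_self hw] at this
  · have hs : Sig (fun w => w ∉ NC r) := by
      rw [hk]
      refine (Sig.of_prim (PrimrecPred.not (PrimrecRel.comp Primrec.eq (primrec_act0 k x)
        (Primrec.const (1, 0))))).of_eq ?_
      intro w
      rw [act0_iff]
    have hkp := primrec_kill (prim_ne x)
    refine (hs.comp (primrec_mul.comp (primrec_inv.comp hkp) Primrec.id)).of_eq ?_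
    intro w
    refine not_congr ?_
    constructor
    · intro h
      exact ⟨_, kill_mem _ w, h⟩
    · rintro ⟨u, hu, huw⟩
      have := NC_ker _ hkr huw
      rw [map_mul, map_inv, inv_mul_eq_one, kill_eq_self hu] at this
      rw [← this]
      exact huw

end case0
end OneRel


namespace OneRel
open FreeGroup (of mk)

section root
variable {Γ : Type} [Group Γ]

/-- A `(k+1)`-st root of the left multiplication by `β`. -/
def rootPerm (k : ℕ) (β : Γ) : Equiv.Perm (Γ × Fin (k + 1)) where
  toFun z := (if z.2 + 1 = 0 then β * z.1 else z.1, z.2 + 1)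
  invFun z := (if z.2 = 0 then β⁻¹ * z.1 else z.1, z.2 - 1)
  left_inv z := by
    obtain ⟨g, i⟩ := z
    by_cases h : i + 1 = 0
    · have : -1 = i := (eq_neg_of_add_eq_zero_left h).symm
      simp [h, this]
    · simp [h]
  right_inv z := by
    obtain ⟨g, i⟩ := z
    by_cases h : i = 0 <;> simp [h]

/-- Left multiplication. -/
def leftPerm (k : ℕ) (Γ : Type) [Group Γ] : Γ →* Equiv.Perm (Γ × Fin (k + 1)) where
  toFun g :=
    { toFun := fun z => (g * z.1, z.2)
      invFun := fun z => (g⁻¹ * z.1, z.2)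
      left_inv := fun z => by simp
      right_inv := fun z => by simp }
  map_one' := by ext1 z; simp
  map_mul' a b := by ext1 z; simp [mul_assoc]

theorem leftPerm_apply (k : ℕ) (g : Γ) (z : Γ × Fin (k + 1)) :
    leftPerm k Γ g z = (g * z.1, z.2) := rfl

theorem rootPerm_pow (k : ℕ) (β : Γ) : (rootPerm k β) ^ (k + 1) = leftPerm k Γ β := by
  have h1 : ∀ (j : ℕ) (hj : j < k + 1) (g : Γ), ((rootPerm k β) ^ j) (g, 0) = (g, ⟨j, hj⟩) := by
    intro j
    induction j with
    | zero => intro _ g; rfl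
    | succ j ih =>
      intro hj g
      rw [pow_succ', Equiv.Perm.mul_apply, ih (by omega)]
      have e : (⟨j, by omega⟩ : Fin (k + 1)) + 1 = ⟨j + 1, hj⟩ := by
        ext
        rw [Fin.val_add_one_of_lt' (by simpa using hj)]
      have e' : (⟨j + 1, hj⟩ : Fin (k + 1)) ≠ 0 := by
        intro h
        have := congrArg Fin.val h
        simp at this
      simp [rootPerm, e, e']
  have h2 : ∀ g : Γ, ((rootPerm k β) ^ (k + 1)) (g, 0) = (β * g, 0) := by
    intro g
    rw [pow_succ', Equiv.Perm.mul_apply, h1 k (by omega)]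
    have e : (⟨k, by omega⟩ : Fin (k + 1)) + 1 = 0 := Fin.last_add_one k
    simp [rootPerm, e]
  ext1 z
  obtain ⟨g, i, hi⟩ := z
  rw [← h1 i hi, ← Equiv.Perm.mul_apply, (Commute.pow_pow_self (rootPerm k β) (k + 1) i).eq, Equiv.Perm.mul_apply, h2,
    h1 i hi, h1 i hi, leftPerm_apply]

end root

section transfer
variable {A : Type} [DecidableEq A]

/-- The substitution `b ↦ b^(k+1)`, `x ↦ x b^δ`. -/
def sub (b x : A) (k : ℕ) (δ : ℤ) : FreeGroup A →* FreeGroup A :=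
  FreeGroup.lift (fun a => if a = b then of b ^ (k + 1) else
    if a = x then of x * of b ^ δ else of a)

theorem sub_b (b x : A) (k : ℕ) (δ : ℤ) : sub b x k δ (of b) = of b ^ (k + 1) := by simp [sub]

theorem sub_x {b x : A} (h : b ≠ x) (k : ℕ) (δ : ℤ) :
    sub b x k δ (of x) = of x * of b ^ δ := by simp [sub, h.symm]

theorem sub_c {b x c : A} (h : c ≠ b) (h' : c ≠ x) (k : ℕ) (δ : ℤ) :
    sub b x k δ (of c) = of c := by simp [sub, h, h']

theorem sub_inj {b x : A} (h : b ≠ x) (k : ℕ) (δ : ℤ) {r w : FreeGroup A}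
    (hw : sub b x k δ w ∈ NC (sub b x k δ r)) : w ∈ NC r := by
  let π : FreeGroup A →* FreeGroup A ⧸ NC r := QuotientGroup.mk' (NC r)
  let θ : FreeGroup A →* Equiv.Perm ((FreeGroup A ⧸ NC r) × Fin (k + 1)) :=
    FreeGroup.lift (fun a => if a = b then rootPerm k (π (of b)) else
      if a = x then leftPerm k _ (π (of x)) * (rootPerm k (π (of b)) ^ δ)⁻¹
      else leftPerm k _ (π (of a)))
  have hb : θ (of b) = rootPerm k (π (of b)) := by simp [θ]
  have hx : θ (of x) = leftPerm k _ (π (of x)) * (rootPerm k (π (of b)) ^ δ)⁻¹ := by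
    simp [θ, h.symm]
  have hc : ∀ c, c ≠ b → c ≠ x → θ (of c) = leftPerm k _ (π (of c)) := by
    intro c h1 h2
    simp [θ, h1, h2]
  have hcomp : θ.comp (sub b x k δ) = (leftPerm k _).comp π := by
    ext1 a
    simp only [MonoidHom.comp_apply]
    by_cases h1 : a = b
    · subst h1
      rw [sub_b, map_pow, hb, rootPerm_pow]
    · by_cases h2 : a = x
      · subst h2
        rw [sub_x h, map_mul, map_zpow, hb, hx]
        simp
      · rw [sub_c h1 h2, hc a h1 h2]
  have hcomp' : ∀ v, θ (sub b x k δ v) = leftPerm k _ (π v) := fun v => DFunLike.congr_fun hcomp v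
  have h1 : θ (sub b x k δ w) = 1 := by
    refine NC_ker θ ?_ hw
    rw [hcomp', show π r = 1 from (QuotientGroup.eq_one_iff _).2 (mem_NC r), map_one]
  rw [hcomp'] at h1
  have h2 : leftPerm k _ (π w) (1, 0) = (1, 0) := by rw [h1]; rfl
  rw [leftPerm_apply] at h2
  have h3 : π w = 1 := by simpa using h2
  exact (QuotientGroup.eq_one_iff _).1 h3

theorem sub_FS {b x : A} (h : b ≠ x) (k : ℕ) (δ : ℤ) {v : FreeGroup A}
    (hv : v ∈ FS {a | a ≠ x}) : sub b x k δ v ∈ FS {a | a ≠ x} := by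
  refine map_FS ?_ hv
  intro a ha
  by_cases h1 : a = b
  · subst h1
    rw [sub_b]
    exact pow_mem (of_mem_FS ha) _
  · rw [sub_c h1 ha]
    exact of_mem_FS ha

/-- The action extracting roots. -/
def act1 (b : A) (k : ℕ) : FreeGroup A →* Equiv.Perm (FreeGroup A × Fin (k + 1)) :=
  FreeGroup.lift (fun a => if a = b then rootPerm k (of b) else leftPerm k _ (of a))

theorem act1_sub {b x : A} (k : ℕ) (δ : ℤ) {v : FreeGroup A}
    (hv : v ∈ FS {a | a ≠ x}) : act1 b k (sub b x k δ v) = leftPerm k _ v := by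
  refine eqOn_FS (φ := (act1 b k).comp (sub b x k δ)) (ψ := leftPerm k _) ?_ hv
  intro a ha
  rw [MonoidHom.comp_apply]
  by_cases h1 : a = b
  · subst h1
    rw [sub_b, map_pow, ← rootPerm_pow]
    simp [act1]
  · rw [sub_c h1 ha]
    simp [act1, h1]

/-- The partial inverse of the substitution. -/
def unsub (b : A) (k : ℕ) (u : FreeGroup A) : FreeGroup A := (act1 b k u (1, 0)).1

theorem unsub_sub {b x : A} (k : ℕ) (δ : ℤ) {v : FreeGroup A}
    (hv : v ∈ FS {a | a ≠ x}) : unsub b k (sub b x k δ v) = v := by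
  rw [unsub, act1_sub k δ hv, leftPerm_apply]
  simp

variable [Primcodable A]

theorem primrec_unsub (b : A) (k : ℕ) : Primrec (unsub b k) := by
  have e0 : PrimrecPred (fun z : A × (FreeGroup A × Fin (k + 1)) => z.1 = b) :=
    PrimrecRel.comp Primrec.eq Primrec.fst (Primrec.const b)
  have e1 : Primrec (fun z : A × (FreeGroup A × Fin (k + 1)) => z.2.1) :=
    Primrec.fst.comp Primrec.snd
  have e2 : Primrec (fun z : A × (FreeGroup A × Fin (k + 1)) => z.2.2) :=
    Primrec.snd.comp Primrec.snd
  have e3 : Primrec (fun z : A × (FreeGroup A × Fin (k + 1)) => of z.1) :=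
    primrec_of.comp Primrec.fst
  have p1 : Primrec (fun z : A × (FreeGroup A × Fin (k + 1)) => z.2.2 + 1) :=
    (Primrec.dom_finite (fun i : Fin (k + 1) => i + 1)).comp e2
  have p2 : Primrec (fun z : A × (FreeGroup A × Fin (k + 1)) => z.2.2 - 1) :=
    (Primrec.dom_finite (fun i : Fin (k + 1) => i - 1)).comp e2
  refine Primrec.fst.comp (primrec_act _ ?_ ?_ _)
  · refine (Primrec.ite e0 (Primrec.pair (Primrec.ite
      (PrimrecRel.comp Primrec.eq p1 (Primrec.const 0))
      (primrec_mul.comp e3 e1) e1) p1) (Primrec.pair (primrec_mul.comp e3 e1) e2)).of_eq ?_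
    rintro ⟨a, g, i⟩
    by_cases h : a = b
    · subst h
      simp [act1, rootPerm]
    · simp [act1, h, leftPerm_apply]
  · refine (Primrec.ite e0 (Primrec.pair (Primrec.ite
      (PrimrecRel.comp Primrec.eq e2 (Primrec.const 0))
      (primrec_mul.comp (primrec_inv.comp e3) e1) e1) p2)
      (Primrec.pair (primrec_mul.comp (primrec_inv.comp e3) e1) e2)).of_eq ?_
    rintro ⟨a, g, i⟩
    by_cases h : a = b
    · subst h
      simp only [act1, FreeGroup.lift_apply_of, if_true]
      rfl
    · simp only [act1, FreeGroup.lift_apply_of, if_neg h]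
      rfl

theorem primrec_sub (b x : A) (k : ℕ) (δ : ℤ) : Primrec (sub b x k δ) := by
  refine primrec_hom _ ?_
  have e0 : ∀ c : A, PrimrecPred (fun z : A => z = c) := fun c =>
    PrimrecRel.comp Primrec.eq Primrec.id (Primrec.const c)
  refine (Primrec.ite (e0 b) (Primrec.const (of b ^ (k + 1)))
    (Primrec.ite (e0 x) (Primrec.const (of x * of b ^ δ)) primrec_of)).of_eq ?_
  intro a
  simp [sub]

theorem transfer {b x : A} (h : b ≠ x) (k : ℕ) (δ : ℤ) {r : FreeGroup A}
    (hF : Fr (sub b x k δ r) {a | a ≠ x}) (hD : De (sub b x k δ r) {a | a ≠ x}) :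
    Fr r {a | a ≠ x} ∧ De r {a | a ≠ x} := by
  have hmap : ∀ w ∈ NC r, sub b x k δ w ∈ NC (sub b x k δ r) := by
    intro w hw
    have : NC r ≤ (NC (sub b x k δ r)).comap (sub b x k δ) := NC_le (mem_NC _)
    exact this hw
  refine ⟨?_, ?_⟩
  · intro w hw hwr
    have h1 := hF _ (sub_FS h k δ hw) (hmap w hwr)
    rw [← unsub_sub (b := b) k δ hw, h1]
    simp [unsub]
  · let P : FreeGroup A → Prop := fun u => unsub b k u ∈ FS {a | a ≠ x} ∧
      sub b x k δ (unsub b k u) = u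
    have hP : PrimrecPred P := PrimrecPred.and
      ((prim_mem_FS (prim_ne x)).comp (primrec_unsub b k))
      (primrec_eq ((primrec_sub b x k δ).comp (primrec_unsub b k)) Primrec.id)
    refine ((sig_refine (prim_ne x) hF hD (P := P) ?_ (Sig.of_prim hP.not)).comp
      (primrec_sub b x k δ)).of_eq ?_
    · rintro u ⟨h1, h2⟩
      rw [← h2]
      exact sub_FS h k δ h1
    · intro w
      refine not_congr ?_
      constructor
      · rintro ⟨u, ⟨h1, h2⟩, h3⟩
        refine ⟨_, h1, ?_⟩
        refine sub_inj h k δ ?_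
        rw [map_mul, map_inv, h2]
        exact h3
      · rintro ⟨v, hv, hvw⟩
        refine ⟨sub b x k δ v, ⟨?_, ?_⟩, ?_⟩
        · rw [unsub_sub k δ hv]; exact hv
        · rw [unsub_sub k δ hv]
        · have := hmap _ hvw
          rwa [map_mul, map_inv] at this

end transfer
end OneRel


namespace OneRel
open FreeGroup (of mk)

theorem filter_lt {A : Type} [DecidableEq A] {L : List (A × Bool)} {p : A × Bool} (hp : p ∈ L) :
    (L.filter (fun q => decide (q.1 ≠ p.1))).length < L.length := by
  rw [List.length_filter_lt_length_iff_exists]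
  exact ⟨p, hp, by simp⟩

theorem good_step {A : Type} [Primcodable A] [DecidableEq A] (N : ℕ) (IH : Good (A × ℤ) N) :
    Good A (N + 1) := by
  intro s hs hN p hp
  by_cases hall : ∀ q ∈ s.toWord, q.1 = p.1
  · refine case0 p.1 s ?_ ?_
    · rintro rfl
      simp at hp
    · rw [← FreeGroup.mk_toWord (x := s)]
      exact mk_mem_FS hall
  push Not at hall
  obtain ⟨q, hq, hqp⟩ := hall
  have hEp := cyc_ess hs hp
  have hEq := cyc_ess hs hq
  obtain ⟨x, px⟩ := p
  obtain ⟨y, py⟩ := q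
  simp only at hEp hEq hqp ⊢
  by_cases hx : ex x s = 1
  · have hk : kill {x} s = 1 := by rw [kill_eq_ex, hx]; simp
    obtain ⟨L', h1, h2, h3⟩ := rewrite x 0 (MonoidHom.id _) 1 (fun _ => 0) (by simp) (by simp)
      s.toWord
    simp only [FreeGroup.mk_toWord, MonoidHom.id_apply, hk, mul_one] at h3
    have h4 := filter_lt hp
    exact (hnn_step x y (Ne.symm hqp) s N IH L' (fun p hp => (h1 p hp).1)
      (by simp only at h4; omega) h3 hEq).2 hEp
  · obtain ⟨k, δ, hkδ⟩ : ∃ (k : ℕ) (δ : ℤ),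
        (ex y s).toAdd * ((k + 1 : ℕ) : ℤ) + (ex x s).toAdd * δ = 0 := by
      have h0 : (ex x s).toAdd ≠ 0 := fun h => hx (by simpa using h)
      generalize (ex x s).toAdd = α at h0
      generalize (ex y s).toAdd = β
      obtain ⟨n, hn | hn⟩ := Int.eq_nat_or_neg α
      · obtain ⟨k, rfl⟩ : ∃ k, n = k + 1 := ⟨n - 1, by omega⟩
        exact ⟨k, -β, by rw [hn]; ring⟩
      · obtain ⟨k, rfl⟩ : ∃ k, n = k + 1 := ⟨n - 1, by omega⟩
        exact ⟨k, β, by rw [hn]; ring⟩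
    let ψ := sub y x k δ
    have hexx : ∀ w, ex x (ψ w) = ex x w := by
      have : (ex x).comp ψ = ex x := by
        ext1 a
        rw [MonoidHom.comp_apply]
        by_cases h1 : a = y
        · subst h1
          rw [sub_b]
          simp [ex, hqp]
        · by_cases h2 : a = x
          · subst h2
            rw [sub_x hqp]
            simp [ex, hqp]
          · rw [sub_c h1 h2]
      exact fun w => DFunLike.congr_fun this w
    have hexy : ∀ w, ex y (ψ w) = (ex y w) ^ (k + 1) * (ex x w) ^ δ := by
      have : (ex y).comp ψ = ((zpowGroupHom δ).comp (ex x)) * ((powMonoidHom (k + 1)).comp (ex y)) := by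
        ext1 a
        rw [MonoidHom.comp_apply]
        by_cases h1 : a = y
        · subst h1
          rw [sub_b]
          simp [ex, hqp]
        · by_cases h2 : a = x
          · subst h2
            rw [sub_x hqp]
            simp [ex, h1]
          · rw [sub_c h1 h2]
            simp [ex, h1, h2]
      intro w
      have := DFunLike.congr_fun this w
      rw [mul_comm]
      exact this
    have hy1 : ex y (ψ s) = 1 := by
      rw [hexy]
      apply Multiplicative.toAdd.injective
      rw [toAdd_mul, toAdd_pow, toAdd_zpow, toAdd_one, ← hkδ]
      simp [mul_comm]
    have hk : kill {y} (ψ s) = 1 := by rw [kill_eq_ex, hy1]; simp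
    have hEx : Ess x (ψ s) := by
      intro g hg
      have := ex_FS (a := x) (by simp) hg
      rw [map_mul, map_mul, map_inv, mul_comm, inv_mul_cancel_left, hexx] at this
      exact hx this
    obtain ⟨L', h1, h2, h3⟩ := rewrite y 0 ψ ((k + 1 : ℕ) : ℤ) (fun a => if a = x then δ else 0)
      (by rw [zpow_natCast]; exact sub_b y x k δ)
      (by
        intro a ha
        by_cases h2 : a = x
        · subst h2
          simpa using sub_x hqp k δ
        · simpa [h2] using sub_c ha h2 k δ) s.toWord
    simp only [FreeGroup.mk_toWord, hk, mul_one] at h3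
    have h4 := filter_lt hq
    have h5 := (hnn_step y x hqp (ψ s) N IH L' (fun p hp => (h1 p hp).1)
      (by simp only at h4; omega) h3 hEx).1
    exact transfer hqp k δ h5.1 h5.2

theorem good_all (N : ℕ) : ∀ (A : Type) [Primcodable A] [DecidableEq A], Good A N := by
  induction N with
  | zero => intro A _ _ s _ h; omega
  | succ N ih => intro A _ _; exact good_step N (ih (A × ℤ))

theorem main_sig {A : Type} [Primcodable A] [DecidableEq A] (r : FreeGroup A) :
    Sig (fun w => w ∉ NC r) := by
  by_cases hr : r = 1
  · subst hr
    refine (Sig.of_prim (primrec_eq Primrec.id (Primrec.const (1 : FreeGroup A))).not).of_eq ?_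
    intro w
    refine not_congr ?_
    constructor
    · rintro rfl; exact one_mem _
    · intro h
      exact NC_ker (MonoidHom.id _) rfl h
  · obtain ⟨s, g, hs, hg, -⟩ := cyc_exists r.toWord
    rw [FreeGroup.mk_toWord] at hg
    have hne : s.toWord ≠ [] := by
      intro h
      rw [FreeGroup.toWord_eq_nil_iff] at h
      subst h
      exact hr (by simpa using hg)
    obtain ⟨p, hp⟩ := List.exists_mem_of_ne_nil _ hne
    obtain ⟨hF, hD⟩ := good_all (s.toWord.length + 1) A s hs (Nat.lt_succ_self _) p hp
    rw [hg, NC_conj]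
    exact sig_not_NC (prim_ne p.1) hF hD

end OneRel

/-- **Magnus (1932):** the word problem for any one-relator group is decidable. -/
theorem one_relator_word_problem_decidable (m : ℕ) (r : FreeGroup (Fin m)) :
    ComputablePred fun l : List (Fin m × Bool) =>
      FreeGroup.mk l ∈ Subgroup.normalClosure ({r} : Set (FreeGroup (Fin m))) := by
  exact OneRel.Sig.computable ((OneRel.sig_NC r).comp OneRel.primrec_mk)
    ((OneRel.main_sig r).comp OneRel.primrec_mk)
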